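/- arXiv:2510.02309 — 2 statements merged into one kernel-verified Lean document; each statement's English description precedes it below -/
import Mathlib

section
/- Let k be any number field. For any reals x ≥ y ≥ max{D_k, e}, one has ∑_{y < N𝔭 ≤ x} 1/N𝔭 ≤ log log x − log log y + O_{[k:ℚ]}(1); that is, there is an effectively computable constant C, depending only on the degree [k:ℚ], such that the sum over prime ideals 𝔭 of k with y < N𝔭 ≤ x of 1/N𝔭 is at most log log x − log log y + C. -/
/-!
The proof is elementary: no zeta function is used, and the discriminant enters only through
Minkowski's theorem. Let `n` be the degree, `D` the discriminant in absolute value,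
`A(t)` the number of nonzero ideals of norm at most `t`, and
`H(t) = recipSum K t = ∑ 1 / N b` over these ideals.

The heart is a growth estimate for `A` with constants depending on `n` alone (`count_le`): if
`2 ^ n * D < u ≤ t`, then `A(t)` is `O_n(t / u)` times the Riesz mean `∑ (2 + log (u / N c)) ^ n`
over `N c ≤ u`. Fix a nonzero ideal `J` and consider the ideal class of the `b` with `b * J` principal. Such a
`b`, with `b * J = (x)`, spreads a unit mass evenly over the nonzero points `z ∈ J` of the box
having the shape of `x` and norm `u * N J`. This box has such points by Minkowski's theorem, and `z`
determines an ideal `c` of norm at most `u` in the class of `b` by `c * J = (z)`. The mass arriving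
at a given `z` is bounded by packing: boxes of nearly the same shape contain comparable numbers of
points, and the shapes of boxes containing `z` fall into at most `(2 + log (u / N c)) ^ n` cells
(`received_le`, `class_count_le`). Fundamental domains and regulators never appear, because the unit
group acts on the whole configuration and it suffices to choose one generator `x` per ideal.

Averaging this over `u = T, T / e, …, √T` gives `A(t) ≪ t * H(T) / log T` for `t ≥ T`
(`card_idealsLE_le`), and partial summation gives `H(X) ≪ H(T) * log X / log T`
(`recipSum_growth`), as soon as `√T > 2 ^ n * D`.

Truncated Euler products translate this into primes. On one side `H(z) ≪ exp (∑ 1 / N 𝔭)` over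
`N 𝔭 ≤ z` (`recipSum_le`); on the other, Rankin's trick with the Chebyshev bound for rational primes
gives `exp (∑ 1 / N 𝔭) ≪ H(x ^ A)` over `N 𝔭 ≤ x`, for an exponent `A` depending on `n`
(`exp_primeRecip_le`, `sqfreeProd_le`). Combining the three bounds, the sum over `z < N 𝔭 ≤ x` is at
most `log log x - log log z + O_n(1)` when `z = y ^ (2 * (n + 2))`. The remaining range
`y < N 𝔭 ≤ z` contributes `O_n(1)` because `∑ log N 𝔭 / N 𝔭 ≪ log z` over `N 𝔭 ≤ z`, a consequence
of the Chebyshev bound (`primeRecip_sub_le_of_short`).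
-/

open Filter Topology NumberField
open scoped BigOperators Classical

noncomputable section

namespace ArtinStark

/-- The absolute value of the discriminant of a number field. -/
def absDisc (F : Type) [Field F] [NumberField F] : ℕ :=
  (NumberField.discr F).natAbs

/-- The number of nonzero integral ideals of `F` of absolute norm `n`. -/
def idealCount (F : Type) [Field F] [NumberField F] (n : ℕ) : ℕ :=
  Nat.card {I : Ideal (𝓞 F) // Ideal.absNorm I = n}

/-- `z : ℂ → ℂ` is the meromorphic continuation of the Dedekind zeta function of `F`:
it agrees with the Dirichlet series `∑_𝔞 (N𝔞)^{-s}` on `Re s > 1` and is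
differentiable away from the (simple) pole `s = 1`. -/
def IsDedekindZeta (F : Type) [Field F] [NumberField F] (z : ℂ → ℂ) : Prop :=
  (∀ s : ℂ, 1 < s.re → z s = LSeries (fun n => (idealCount F n : ℂ)) s) ∧
    ∀ s : ℂ, s ≠ 1 → DifferentiableAt ℂ z s

/-- `χ : G → ℂ` is the character of a finite-dimensional complex representation of `G`. -/
def IsCharacter {G : Type} [Group G] (χ : G → ℂ) : Prop :=
  ∃ (n : ℕ) (ρ : Representation ℂ G (Fin n → ℂ)),
    ∀ g, χ g = LinearMap.trace ℂ (Fin n → ℂ) (ρ g)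

/-- The standard inner product of class functions on a finite group. -/
def charInner {G : Type} [Group G] [Fintype G] (χ ψ : G → ℂ) : ℂ :=
  (Fintype.card G : ℂ)⁻¹ * ∑ g : G, χ g * (starRingEnd ℂ) (ψ g)

/-- The trivial character `1_G`. -/
def trivChar (G : Type) : G → ℂ := fun _ => 1

/-- `χ` is an irreducible character of `G`. -/
def IsIrreducibleCharacter {G : Type} [Group G] [Fintype G] (χ : G → ℂ) : Prop :=
  IsCharacter χ ∧ charInner χ χ = 1

/-- `μ(χ) = min { Re χ(g) : g ∈ G }`. -/
def muChar {G : Type} [Group G] [Fintype G] (χ : G → ℂ) : ℝ :=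
  Finset.univ.inf' ⟨1, Finset.mem_univ 1⟩ fun g => (χ g).re

/-- `κ` is the leading Laurent coefficient at `s = 1` of `L`, where `m` is the order of
the pole of `L` at `s = 1`; i.e. `κ = lim_{s → 1} (s-1)^m L(s)`. -/
def IsLeadingCoeffAtOne (L : ℂ → ℂ) (m : ℕ) (κ : ℂ) : Prop :=
  Filter.Tendsto (fun s : ℂ => (s - 1) ^ m * L s) (𝓝[≠] (1 : ℂ)) (𝓝 κ)

/-- The character of `Gt` induced (via the subgroup `H` of `Gt` and the pullback along the
surjection `π : H → G`) by a character `χ` of `G`.  When `Gt = Gal(K̃/ℚ)`, `H = Gal(K̃/k)`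
and `π` is the restriction map onto `G = Gal(K/k)`, this is the induction `χ̃` of `χ` to `ℚ`. -/
def inducedChar {G Gt : Type} [Group G] [Group Gt] [Fintype Gt] (H : Subgroup Gt)
    (π : H →* G) (χ : G → ℂ) : Gt → ℂ := fun g =>
  (Nat.card H : ℂ)⁻¹ *
    ∑ x : Gt, if h : x⁻¹ * g * x ∈ H then χ (π ⟨x⁻¹ * g * x, h⟩) else 0

/-- `ψ` is a potentially exceptional character relative to the Artin L-function data `L`
and analytic conductor data `q`: it is irreducible, trivial or quadratic (`ψ² = 1_G`), and
`L(s,ψ)` has a real zero `β > 1 - 1/(4 log q(ψ))`. -/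
def PotExc {G : Type} [Group G] [Fintype G] (L : (G → ℂ) → ℂ → ℂ) (q : (G → ℂ) → ℕ)
    (ψ : G → ℂ) : Prop :=
  IsIrreducibleCharacter ψ ∧ (∀ g, ψ g ^ 2 = 1) ∧
    ∃ β : ℝ, 1 - 1 / (4 * Real.log (q ψ)) < β ∧ β < 1 ∧ L ψ (β : ℂ) = 0

/-- The product of `f 𝔭` over the (finitely many) nonzero prime ideals of `k` with
norm in `(y, x]`. -/
def primeProdBetween (k : Type) [Field k] [NumberField k]
    (f : Ideal (𝓞 k) → ℂ) (y x : ℝ) : ℂ :=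
  ∏ᶠ (𝔭 : Ideal (𝓞 k))
    (_ : 𝔭.IsPrime ∧ 𝔭 ≠ ⊥ ∧ y < (Ideal.absNorm 𝔭 : ℝ) ∧ (Ideal.absNorm 𝔭 : ℝ) ≤ x), f 𝔭

/-- The product of `f 𝔭` over the (finitely many) nonzero prime ideals of `k` with
norm at most `T`. -/
def primeProd (k : Type) [Field k] [NumberField k]
    (f : Ideal (𝓞 k) → ℂ) (T : ℝ) : ℂ :=
  ∏ᶠ (𝔭 : Ideal (𝓞 k)) (_ : 𝔭.IsPrime ∧ 𝔭 ≠ ⊥ ∧ (Ideal.absNorm 𝔭 : ℝ) ≤ T), f 𝔭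

/-- `L` has an Euler product over the nonzero primes of `k` with local factors `Lp`,
valid for `Re s > 1`. -/
def HasEulerProduct (k : Type) [Field k] [NumberField k]
    (Lp : Ideal (𝓞 k) → ℂ → ℂ) (L : ℂ → ℂ) : Prop :=
  ∀ s : ℂ, 1 < s.re →
    HasProd (fun 𝔭 : {𝔭 : Ideal (𝓞 k) // 𝔭.IsPrime ∧ 𝔭 ≠ ⊥} => Lp 𝔭 s) (L s)

/-- The quantity `ε(χ)` of the paper (relative to the data `L`, `q`): the minimum of `1`
and of `(log q(ψ) / (D_k q(ψ))^{1/(2[k:ℚ])})^{⟨χ,ψ⟩}` over potentially exceptional `ψ`. -/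
def epsChar {G : Type} [Group G] [Fintype G] (L : (G → ℂ) → ℂ → ℂ) (q : (G → ℂ) → ℕ)
    (Dk n : ℕ) (χ : G → ℂ) : ℝ :=
  sInf (insert 1 {x : ℝ | ∃ ψ : G → ℂ, PotExc L q ψ ∧
    x = (Real.log (q ψ) / ((Dk * q ψ : ℝ) ^ (1 / (2 * n : ℝ)))) ^ (charInner χ ψ).re})

/-- The quantity `η(ψ)` of the paper: `(1-β_ψ) log q(ψ)` for potentially exceptional `ψ`
(with `β` supplying the real zero `β_ψ`), and `1` otherwise. -/
def etaOf {G : Type} [Group G] [Fintype G] (L : (G → ℂ) → ℂ → ℂ) (q : (G → ℂ) → ℕ)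
    (β : (G → ℂ) → ℝ) (ψ : G → ℂ) : ℝ :=
  if PotExc L q ψ then (1 - β ψ) * Real.log (q ψ) else 1

/-- The quantity `η(ψ,τ)` of the paper: `exp(-∫_τ^∞ dt/(t^{2-β_ψ} log t))` for potentially
exceptional `ψ`, and `1` otherwise. -/
def etaTOf {G : Type} [Group G] [Fintype G] (L : (G → ℂ) → ℂ → ℂ) (q : (G → ℂ) → ℕ)
    (β : (G → ℂ) → ℝ) (ψ : G → ℂ) (τ : ℝ) : ℝ :=
  if PotExc L q ψ then Real.exp (-(∫ t in Set.Ioi τ, 1 / (t ^ (2 - β ψ) * Real.log t))) else 1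

/-! ### Lattice points in boxes -/

section Boxes

variable {K : Type} [Field K] [NumberField K]

lemma box_finite (J : Ideal (𝓞 K)) (R : InfinitePlace K → ℝ) :
    {x : 𝓞 K | x ∈ J ∧ x ≠ 0 ∧ ∀ w : InfinitePlace K, w (x : K) ≤ R w}.Finite := by
  have h := Embeddings.finite_of_norm_le K ℂ (∑ w, |R w|)
  refine Set.Finite.of_finite_image (f := fun x : 𝓞 K => (x : K)) (h.subset ?_)
    (RingOfIntegers.coe_injective.injOn)
  rintro _ ⟨x, ⟨-, -, hx⟩, rfl⟩
  refine ⟨x.isIntegral_coe, fun φ => ?_⟩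
  rw [← InfinitePlace.apply φ]
  exact (hx _).trans ((le_abs_self _).trans
    (Finset.single_le_sum (f := fun w => |R w|) (fun i _ => abs_nonneg _) (Finset.mem_univ _)))

/-- The finite set of nonzero `x ∈ J` with `|x|_w ≤ R w` at every infinite place `w`. -/
def boxPts (J : Ideal (𝓞 K)) (R : InfinitePlace K → ℝ) : Finset (𝓞 K) :=
  (box_finite J R).toFinset

lemma mem_boxPts {J : Ideal (𝓞 K)} {R : InfinitePlace K → ℝ} {x : 𝓞 K} :
    x ∈ boxPts J R ↔ x ∈ J ∧ x ≠ 0 ∧ ∀ w : InfinitePlace K, w (x : K) ≤ R w := by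
  simp [boxPts]

/-- The coordinates of the cube of side `R w / 2` containing the image of `x` at the place `w`.
At a real place the second coordinate is `0`. -/
def cell (R : InfinitePlace K → ℝ) (x : 𝓞 K) (w : InfinitePlace K) : ℤ × ℤ :=
  (⌊2 * (w.embedding (x : K)).re / R w⌋, ⌊2 * (w.embedding (x : K)).im / R w⌋)

lemma abs_sub_lt_of_floor_eq {a b r : ℝ} (hr : 0 < r) (h : ⌊2 * a / r⌋ = ⌊2 * b / r⌋) :
    |a - b| < r / 2 := by
  have := Int.abs_sub_lt_one_of_floor_eq_floor h
  rw [← sub_div, abs_div, abs_of_pos hr, div_lt_one hr, ← mul_sub, abs_mul, abs_two] at this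
  linarith

lemma floor_mem_of_abs_le {a r s : ℝ} (hr : 0 < r) (h : |a| ≤ s * r) :
    ⌊2 * a / r⌋ ∈ Finset.Icc ⌊-(2 * s)⌋ ⌊2 * s⌋ := by
  rw [abs_le] at h
  rw [Finset.mem_Icc]
  constructor
  · apply Int.floor_le_floor
    rw [le_div_iff₀ hr]; linarith
  · apply Int.floor_le_floor
    rw [div_le_iff₀ hr]; linarith

lemma card_floor_Icc_le {s : ℝ} (hs : 1 ≤ s) :
    ((Finset.Icc ⌊-(2 * s)⌋ ⌊2 * s⌋).card : ℝ) ≤ 6 * s := by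
  rw [Int.card_Icc]
  have h0 : ⌊-(2 * s)⌋ ≤ ⌊2 * s⌋ := Int.floor_le_floor (by linarith)
  have h1 : (((⌊2 * s⌋ + 1 - ⌊-(2 * s)⌋).toNat : ℤ) : ℝ) = ((⌊2 * s⌋ + 1 - ⌊-(2 * s)⌋ : ℤ) : ℝ) := by
    rw [Int.toNat_of_nonneg (by linarith)]
  rw [Int.cast_natCast] at h1
  rw [h1]
  push_cast
  have h2 := Int.floor_le (2 * s)
  have h3 := Int.lt_floor_add_one (-(2 * s))
  linarith

/-- Packing bound: cut the enlarged box into cells whose differences lie in the box `R`; two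
elements of `J` in one cell differ by `0` or by a point of `boxPts J R`. The exponent is exactly
the degree because complex places contribute two real dimensions and real places one. -/
lemma card_le_packing (J : Ideal (𝓞 K)) (R : InfinitePlace K → ℝ) (hR : ∀ w, 0 < R w)
    {s : ℝ} (hs : 1 ≤ s) (X : Finset (𝓞 K))
    (hX : ∀ x ∈ X, x ∈ J ∧ ∀ w : InfinitePlace K, w (x : K) ≤ s * R w) :
    (X.card : ℝ) ≤ (6 * s) ^ Module.finrank ℚ K * ((boxPts J R).card + 1) := by
  have h1 : X.card ≤ ((boxPts J R).card + 1) * (X.image (cell R)).card := by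
    refine Finset.card_le_mul_card_image X _ fun c hc => ?_
    obtain ⟨x₀, hx₀, rfl⟩ := Finset.mem_image.mp hc
    rw [← Finset.card_insert_of_notMem (a := (0 : 𝓞 K)) (s := boxPts J R)
      (by simp [mem_boxPts])]
    refine Finset.card_le_card_of_injOn (fun x => x - x₀) ?_ (fun a _ b _ h => by simpa using h)
    intro x hx
    simp only [Finset.coe_filter, Set.mem_ofPred_eq] at hx
    obtain ⟨hxX, hcell⟩ := hx
    simp only [Finset.coe_insert, Set.mem_insert_iff, Finset.mem_coe]
    by_cases h0 : x - x₀ = 0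
    · exact Or.inl h0
    refine Or.inr (mem_boxPts.mpr ⟨J.sub_mem (hX x hxX).1 (hX x₀ hx₀).1, h0, fun w => ?_⟩)
    have hw := congrFun hcell w
    simp only [cell, Prod.mk.injEq] at hw
    have hre := abs_sub_lt_of_floor_eq (hR w) hw.1
    have him := abs_sub_lt_of_floor_eq (hR w) hw.2
    rw [← InfinitePlace.norm_embedding_eq w]
    refine (Complex.norm_le_abs_re_add_abs_im _).trans ?_
    simp only [map_sub, Complex.sub_re, Complex.sub_im]
    linarith
  let S : InfinitePlace K → Finset (ℤ × ℤ) := fun w =>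
    Finset.Icc ⌊-(2 * s)⌋ ⌊2 * s⌋ ×ˢ (if w.IsReal then {0} else Finset.Icc ⌊-(2 * s)⌋ ⌊2 * s⌋)
  have h2 : X.image (cell R) ⊆ Fintype.piFinset S := by
    intro c hc
    obtain ⟨x, hx, rfl⟩ := Finset.mem_image.mp hc
    rw [Fintype.mem_piFinset]
    intro w
    have hn : ‖w.embedding (x : K)‖ ≤ s * R w := by
      rw [InfinitePlace.norm_embedding_eq]; exact (hX x hx).2 w
    simp only [S, cell, Finset.mem_product]
    refine ⟨floor_mem_of_abs_le (hR w) ((Complex.abs_re_le_norm _).trans hn), ?_⟩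
    split_ifs with hw
    · have : (w.embedding (x : K)).im = 0 := by
        have := InfinitePlace.embedding_of_isReal_apply hw (x : K)
        rw [← this]; exact Complex.ofReal_im _
      simp [this]
    · exact floor_mem_of_abs_le (hR w) ((Complex.abs_im_le_norm _).trans hn)
  have h3 : ((X.image (cell R)).card : ℝ) ≤ (6 * s) ^ Module.finrank ℚ K := by
    calc ((X.image (cell R)).card : ℝ) ≤ ((Fintype.piFinset S).card : ℝ) := by
          exact_mod_cast Finset.card_le_card h2
      _ = ∏ w, ((S w).card : ℝ) := by rw [Fintype.card_piFinset]; push_cast; rfl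
      _ ≤ ∏ w : InfinitePlace K, (6 * s) ^ w.mult := by
          refine Finset.prod_le_prod (fun _ _ => by positivity) fun w _ => ?_
          simp only [S, Finset.card_product, InfinitePlace.mult]
          have := card_floor_Icc_le hs
          split_ifs with hw
          · simpa using this
          · push_cast
            rw [pow_two]
            gcongr
      _ = (6 * s) ^ Module.finrank ℚ K := by
          rw [Finset.prod_pow_eq_pow_sum, InfinitePlace.sum_mult_eq]
  calc (X.card : ℝ) ≤ ((boxPts J R).card + 1) * ((X.image (cell R)).card : ℝ) := by
        exact_mod_cast h1
    _ ≤ ((boxPts J R).card + 1) * (6 * s) ^ Module.finrank ℚ K := by gcongr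
    _ = _ := mul_comm _ _

/-- Minkowski's theorem: a box whose sides have product exceeding `2 ^ n · D · N J`, complex places
counted twice, contains a nonzero element of `J`. Replacing `√D` by `D` costs nothing here. -/
lemma boxPts_nonempty (J : Ideal (𝓞 K)) (hJ : J ≠ ⊥) (R : InfinitePlace K → ℝ) (hR : ∀ w, 0 < R w)
    {u : ℝ} (hu : 2 ^ Module.finrank ℚ K * (absDisc K : ℝ) < u)
    (hprod : ∏ w, R w ^ w.mult = u * (Ideal.absNorm J : ℝ)) :
    (boxPts J R).Nonempty := by
  have hJ0 : (J : FractionalIdeal (nonZeroDivisors (𝓞 K)) K) ≠ 0 :=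
    FractionalIdeal.coeIdeal_ne_zero.mpr hJ
  have hN : (0 : ℝ) < Ideal.absNorm J := by
    have := Ideal.absNorm_eq_zero_iff.not.mpr hJ
    positivity
  have hvol : mixedEmbedding.minkowskiBound K (Units.mk0 _ hJ0) <
      MeasureTheory.volume (mixedEmbedding.convexBodyLT K fun w => (R w).toNNReal) := by
    rw [mixedEmbedding.minkowskiBound,
      mixedEmbedding.volume_fundamentalDomain_fractionalIdealLatticeBasis,
      mixedEmbedding.volume_fundamentalDomain_latticeBasis, mixedEmbedding.convexBodyLT_volume,
      mixedEmbedding.finrank]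
    have hD : (1 : ℝ) ≤ absDisc K := by
      have := Int.natAbs_pos.mpr (discr_ne_zero K)
      exact_mod_cast this
    have hsq : ((NNReal.sqrt ‖discr K‖₊ : NNReal) : ℝ) ≤ absDisc K := by
      have h1 : (‖discr K‖₊ : ℝ) = absDisc K := by
        rw [coe_nnnorm, Int.norm_eq_abs, absDisc, Nat.cast_natAbs]; simp
      rw [Real.coe_sqrt, h1, Real.sqrt_le_self_iff]
      exact Or.inr hD
    have hI : (FractionalIdeal.absNorm (J : FractionalIdeal (nonZeroDivisors (𝓞 K)) K) : ℚ) =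
        (Ideal.absNorm J : ℚ) := FractionalIdeal.coeIdeal_absNorm J
    have e1 : ENNReal.ofReal ((Ideal.absNorm J : ℝ) * (NNReal.sqrt ‖discr K‖₊ : NNReal) *
        2 ^ Module.finrank ℚ K) < ENNReal.ofReal (u * Ideal.absNorm J) := by
      refine (ENNReal.ofReal_lt_ofReal_iff (mul_pos (lt_of_le_of_lt (by positivity) hu) hN)).mpr ?_
      calc _ ≤ (Ideal.absNorm J : ℝ) * absDisc K * 2 ^ Module.finrank ℚ K := by gcongr
        _ = (2 ^ Module.finrank ℚ K * absDisc K) * Ideal.absNorm J := by ring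
        _ < _ := by gcongr
    refine lt_of_le_of_lt ?_ (e1.trans_le ?_)
    · rw [Units.val_mk0, hI, ENNReal.ofReal_mul (by positivity), ENNReal.ofReal_mul (by positivity),
        ENNReal.ofReal_pow (by norm_num), ENNReal.ofReal_coe_nnreal]
      simp only [ENNReal.ofReal_ofNat, Rat.cast_natCast]
      gcongr
      refine mul_le_of_le_one_left' (pow_le_one' ?_ _)
      exact ENNReal.inv_le_one.mpr one_le_two
    · rw [← hprod, ENNReal.ofReal_prod_of_nonneg (fun i _ => by have := hR i; positivity)]
      refine le_mul_of_one_le_of_le ?_ (le_of_eq ?_)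
      · exact_mod_cast mixedEmbedding.one_le_convexBodyLTFactor K
      · push_cast
        refine Finset.prod_congr rfl fun w _ => ?_
        rw [ENNReal.ofReal_pow (hR w).le]
        rfl
  obtain ⟨a, ha, ha0, haw⟩ := mixedEmbedding.exists_ne_zero_mem_ideal_lt K _ hvol
  simp only [Units.val_mk0] at ha
  obtain ⟨x, hx, rfl⟩ := (FractionalIdeal.mem_coeIdeal _).mp ha
  refine ⟨x, mem_boxPts.mpr ⟨hx, fun h => ha0 (by simp [h]), fun w => ?_⟩⟩
  have := haw w
  rw [Real.coe_toNNReal _ (hR w).le] at this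
  exact this.le

end Boxes

/-! ### Mass transport between ideals of one class -/

section Transport

variable {K : Type} [Field K] [NumberField K]

lemma idealsLE_finite (t : ℝ) :
    {I : Ideal (𝓞 K) | I ≠ ⊥ ∧ (Ideal.absNorm I : ℝ) ≤ t}.Finite :=
  (Ideal.finite_setOfPred_absNorm_le ⌊t⌋₊).subset (fun _ h => Nat.le_floor h.2)

/-- The finite set of nonzero ideals of norm at most `t`. -/
def idealsLE (K : Type) [Field K] [NumberField K] (t : ℝ) : Finset (Ideal (𝓞 K)) :=
  (idealsLE_finite (K := K) t).toFinset

lemma mem_idealsLE {t : ℝ} {I : Ideal (𝓞 K)} :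
    I ∈ idealsLE K t ↔ I ≠ ⊥ ∧ (Ideal.absNorm I : ℝ) ≤ t := by
  simp [idealsLE]

lemma one_le_absNorm {I : Ideal (𝓞 K)} (h : I ≠ ⊥) : (1 : ℝ) ≤ Ideal.absNorm I := by
  have := Nat.one_le_iff_ne_zero.mpr (Ideal.absNorm_eq_zero_iff.not.mpr h)
  exact_mod_cast this

lemma absNorm_mul_cast (I J : Ideal (𝓞 K)) :
    ((Ideal.absNorm (I * J) : ℕ) : ℝ) = Ideal.absNorm I * Ideal.absNorm J := by
  have h : Ideal.absNorm (I * J) = Ideal.absNorm I * Ideal.absNorm J :=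
    map_mul Ideal.absNorm I J
  rw [h, Nat.cast_mul]

lemma prod_place_eq (x : 𝓞 K) :
    ∏ w : InfinitePlace K, w (x : K) ^ w.mult = (Ideal.absNorm (Ideal.span {x}) : ℝ) := by
  rw [InfinitePlace.prod_eq_abs_norm, Ideal.absNorm_span_singleton, ← Algebra.coe_norm_int,
    Nat.cast_natAbs]
  simp

lemma place_mul (w : InfinitePlace K) (x y : 𝓞 K) :
    w ((x * y : 𝓞 K) : K) = w (x : K) * w (y : K) := by
  rw [show ((x * y : 𝓞 K) : K) = (x : K) * (y : K) from rfl, map_mul w]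

lemma place_pos {x : 𝓞 K} (hx : x ≠ 0) (w : InfinitePlace K) : 0 < w (x : K) := by
  rw [InfinitePlace.pos_iff]; simpa using hx

lemma one_le_absNorm_span {x : 𝓞 K} (hx : x ≠ 0) :
    (1 : ℝ) ≤ Ideal.absNorm (Ideal.span {x}) := one_le_absNorm (by simpa using hx)

/-- The side lengths of the box with the same shape as `x` and with norm `V`. -/
def rad (V : ℝ) (x : 𝓞 K) (w : InfinitePlace K) : ℝ :=
  w (x : K) * (V / Ideal.absNorm (Ideal.span {x})) ^ ((Module.finrank ℚ K : ℝ)⁻¹)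

lemma rad_pos {V : ℝ} (hV : 0 < V) {x : 𝓞 K} (hx : x ≠ 0) (w : InfinitePlace K) :
    0 < rad V x w := by
  have := place_pos hx w
  have := one_le_absNorm_span hx
  unfold rad
  positivity

lemma rpow_inv_pow_finrank {a : ℝ} (ha : 0 ≤ a) :
    (a ^ ((Module.finrank ℚ K : ℝ)⁻¹)) ^ Module.finrank ℚ K = a :=
  Real.rpow_inv_natCast_pow ha Module.finrank_pos.ne'

lemma prod_rad {V : ℝ} (hV : 0 < V) {x : 𝓞 K} (hx : x ≠ 0) :
    ∏ w, rad V x w ^ w.mult = V := by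
  have h1 := one_le_absNorm_span hx
  simp only [rad, mul_pow]
  rw [Finset.prod_mul_distrib, prod_place_eq, Finset.prod_pow_eq_pow_sum, InfinitePlace.sum_mult_eq,
    rpow_inv_pow_finrank (by positivity)]
  field_simp

lemma card_places_le : Fintype.card (InfinitePlace K) ≤ Module.finrank ℚ K := by
  rw [← InfinitePlace.sum_mult_eq, ← Finset.card_univ, Finset.card_eq_sum_ones]
  exact Finset.sum_le_sum fun w _ => w.mult_pos

/-- The mass received by `z`: the shapes of boxes of norm `V` containing `z` are sorted into
multiplicative cells `e ^ j ≤ rad w / |z|_w < e ^ (j + 1)`; there are at most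
`(2 + log (V / N z)) ^ n` cells, and by packing each contributes `O_n(s)`. -/
lemma received_le (J : Ideal (𝓞 K)) {V s : ℝ} (hV : 0 < V) (hs : 1 ≤ s) {z : 𝓞 K} (hzJ : z ∈ J)
    (hz : z ≠ 0) (hzV : (Ideal.absNorm (Ideal.span {z}) : ℝ) ≤ V) (X : Finset (𝓞 K))
    (hX : ∀ x ∈ X, x ∈ J ∧ x ≠ 0 ∧ (Ideal.absNorm (Ideal.span {x}) : ℝ) ≤ s * V ∧
      z ∈ boxPts J (rad V x)) :
    ∑ x ∈ X, ((boxPts J (rad V x)).card : ℝ)⁻¹ ≤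
      2 * (6 * Real.exp 1) ^ Module.finrank ℚ K * s *
        (2 + Real.log (V / Ideal.absNorm (Ideal.span {z}))) ^ Module.finrank ℚ K := by
  set n := Module.finrank ℚ K with hn
  set L := Real.log (V / Ideal.absNorm (Ideal.span {z})) with hL
  have hz1 := one_le_absNorm_span hz
  have hL0 : 0 ≤ L := Real.log_nonneg ((one_le_div (by positivity)).mpr hzV)
  let q : 𝓞 K → InfinitePlace K → ℕ := fun x w => ⌊Real.log (rad V x w / w (z : K))⌋₊
  have hratio : ∀ x ∈ X, ∀ w, 0 ≤ Real.log (rad V x w / w (z : K)) := fun x hx w =>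
    Real.log_nonneg ((one_le_div (place_pos hz w)).mpr ((mem_boxPts.mp (hX x hx).2.2.2).2.2 w))
  have hmaps : ∀ x ∈ X, q x ∈ Fintype.piFinset (fun _ : InfinitePlace K => Finset.range (⌊L⌋₊ + 1)) := by
    intro x hx
    rw [Fintype.mem_piFinset]
    intro w
    rw [Finset.mem_range, Nat.lt_succ_iff]
    apply Nat.floor_le_floor
    have hprod : ∏ w, (rad V x w / w (z : K)) ^ w.mult = V / Ideal.absNorm (Ideal.span {z}) := by
      simp only [div_pow]
      rw [Finset.prod_div_distrib, prod_rad hV (hX x hx).2.1, prod_place_eq]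
    rw [hL, ← hprod, Real.log_prod (fun w _ => by
      have := place_pos hz w
      have := rad_pos hV (hX x hx).2.1 w
      positivity)]
    refine le_trans ?_ (Finset.single_le_sum (fun i _ => ?_) (Finset.mem_univ w))
    · rw [Real.log_pow]
      exact le_mul_of_one_le_left (hratio x hx w) (by exact_mod_cast w.mult_pos)
    · rw [Real.log_pow]
      exact mul_nonneg (by positivity) (hratio x hx i)
  rw [← Finset.sum_fiberwise_of_maps_to hmaps]
  have hfib : ∀ j ∈ Fintype.piFinset (fun _ : InfinitePlace K => Finset.range (⌊L⌋₊ + 1)),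
      ∑ x ∈ X with q x = j, ((boxPts J (rad V x)).card : ℝ)⁻¹ ≤
        2 * (6 * Real.exp 1) ^ n * s := by
    intro j _
    let R₀ : InfinitePlace K → ℝ := fun w => Real.exp (j w) * w (z : K)
    have hR₀ : ∀ w, 0 < R₀ w := fun w => mul_pos (Real.exp_pos _) (place_pos hz w)
    have hzR : z ∈ boxPts J R₀ := mem_boxPts.mpr ⟨hzJ, hz, fun w =>
      le_mul_of_one_le_left (place_pos hz w).le (Real.one_le_exp (by positivity))⟩
    have hM : (1 : ℝ) ≤ (boxPts J R₀).card := by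
      exact_mod_cast Finset.card_pos.mpr ⟨z, hzR⟩
    have hbounds : ∀ x ∈ X.filter (fun x => q x = j), ∀ w,
        R₀ w ≤ rad V x w ∧ rad V x w ≤ Real.exp 1 * R₀ w := by
      intro x hx w
      obtain ⟨hxX, hq⟩ := Finset.mem_filter.mp hx
      have hj : (j w : ℝ) = (⌊Real.log (rad V x w / w (z : K))⌋₊ : ℝ) := by rw [← hq]
      have hzw := place_pos hz w
      have hr := rad_pos hV (hX x hxX).2.1 w
      have h1 : (j w : ℝ) ≤ Real.log (rad V x w / w (z : K)) := by
        rw [hj]; exact Nat.floor_le (hratio x hxX w)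
      have h2 : Real.log (rad V x w / w (z : K)) ≤ 1 + j w := by
        rw [hj, add_comm]; exact (Nat.lt_floor_add_one _).le
      rw [Real.le_log_iff_exp_le (by positivity), le_div_iff₀ hzw] at h1
      rw [Real.log_le_iff_le_exp (by positivity), div_le_iff₀ hzw, Real.exp_add, mul_assoc] at h2
      exact ⟨h1, h2⟩
    have hcard : ((X.filter (fun x => q x = j)).card : ℝ) ≤
        (6 * Real.exp 1) ^ n * s * ((boxPts J R₀).card + 1) := by
      have h1 : 1 ≤ s ^ ((n : ℝ)⁻¹) := Real.one_le_rpow hs (by positivity)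
      have := card_le_packing J R₀ hR₀ (s := Real.exp 1 * s ^ ((n : ℝ)⁻¹))
        (one_le_mul_of_one_le_of_one_le (Real.one_le_exp zero_le_one) h1)
        (X.filter (fun x => q x = j)) (fun x hx => by
          have hxX := (Finset.mem_filter.mp hx).1
          refine ⟨(hX x hxX).1, fun w => ?_⟩
          have hNx := one_le_absNorm_span (hX x hxX).2.1
          have hb := (hbounds x hx w).2
          have hwx := place_pos (hX x hxX).2.1 w
          have h3 : w (x : K) = rad V x w *
              (Ideal.absNorm (Ideal.span {x}) / V : ℝ) ^ ((n : ℝ)⁻¹) := by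
            rw [rad, mul_assoc, ← Real.mul_rpow (by positivity) (by positivity),
              div_mul_div_cancel₀ (by positivity), div_self (by positivity), Real.one_rpow, mul_one]
          rw [h3]
          calc _ ≤ Real.exp 1 * R₀ w * s ^ ((n : ℝ)⁻¹) := by
                gcongr
                rw [div_le_iff₀ hV]; exact (hX x hxX).2.2.1
            _ = _ := by ring)
      rw [← mul_assoc, mul_pow _ (s ^ _), rpow_inv_pow_finrank (by linarith)] at this
      exact this
    calc ∑ x ∈ X with q x = j, ((boxPts J (rad V x)).card : ℝ)⁻¹
        ≤ ∑ x ∈ X with q x = j, ((boxPts J R₀).card : ℝ)⁻¹ := by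
          refine Finset.sum_le_sum fun x hx => ?_
          gcongr
          intro y hy
          rw [mem_boxPts] at hy ⊢
          exact ⟨hy.1, hy.2.1, fun w => (hy.2.2 w).trans (hbounds x hx w).1⟩
      _ = ((X.filter (fun x => q x = j)).card : ℝ) * ((boxPts J R₀).card : ℝ)⁻¹ := by
          rw [Finset.sum_const, nsmul_eq_mul]
      _ ≤ ((6 * Real.exp 1) ^ n * s * (2 * (boxPts J R₀).card)) * ((boxPts J R₀).card : ℝ)⁻¹ := by
          gcongr
          refine hcard.trans ?_
          gcongr
          linarith
      _ = _ := by field_simp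
  refine (Finset.sum_le_sum hfib).trans ?_
  rw [Finset.sum_const, nsmul_eq_mul, Fintype.card_piFinset, Finset.prod_const, Finset.card_range,
    Finset.card_univ, mul_comm]
  gcongr
  push_cast
  calc ((⌊L⌋₊ : ℝ) + 1) ^ Fintype.card (InfinitePlace K) ≤ (2 + L) ^ Fintype.card (InfinitePlace K) := by
        have := Nat.floor_le hL0
        exact pow_le_pow_left₀ (by positivity) (by linarith) _
    _ ≤ (2 + L) ^ n := pow_le_pow_right₀ (by linarith) card_places_le

lemma rad_mul_unit (V : ℝ) (x : 𝓞 K) (η : (𝓞 K)ˣ) (w : InfinitePlace K) :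
    rad V (x * (η : 𝓞 K)) w = rad V x w * w ((η : 𝓞 K) : K) := by
  have : Ideal.span {x * (η : 𝓞 K)} = Ideal.span {x} :=
    Ideal.span_singleton_mul_right_unit η.isUnit x
  simp only [rad, this, map_mul]
  ring

lemma card_boxPts_mul_unit (J : Ideal (𝓞 K)) (V : ℝ) (x : 𝓞 K) (η : (𝓞 K)ˣ) :
    (boxPts J (rad V (x * (η : 𝓞 K)))).card = (boxPts J (rad V x)).card := by
  symm
  refine Finset.card_bij (fun y _ => y * (η : 𝓞 K)) ?_ ?_ ?_
  · intro y hy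
    rw [mem_boxPts] at hy ⊢
    refine ⟨J.mul_mem_right _ hy.1, mul_ne_zero hy.2.1 η.ne_zero, fun w => ?_⟩
    rw [rad_mul_unit, place_mul]
    exact mul_le_mul_of_nonneg_right (hy.2.2 w) (apply_nonneg _ _)
  · intro a _ b _ h
    exact mul_right_cancel₀ η.ne_zero h
  · intro y hy
    rw [mem_boxPts] at hy
    refine ⟨y * (η⁻¹ : (𝓞 K)ˣ), ?_, by simp⟩
    rw [mem_boxPts]
    refine ⟨J.mul_mem_right _ hy.1, mul_ne_zero hy.2.1 (Units.ne_zero _), fun w => ?_⟩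
    have h1 := hy.2.2 w
    rw [rad_mul_unit] at h1
    have h2 : w ((η : 𝓞 K) : K) * w (((η⁻¹ : (𝓞 K)ˣ) : 𝓞 K) : K) = 1 := by
      rw [← map_mul, ← map_mul, Units.mul_inv, map_one, map_one]
    rw [place_mul]
    calc _ ≤ rad V x w * w ((η : 𝓞 K) : K) * w (((η⁻¹ : (𝓞 K)ˣ) : 𝓞 K) : K) :=
          mul_le_mul_of_nonneg_right h1 (apply_nonneg _ _)
      _ = _ := by rw [mul_assoc, h2, mul_one]

/-- The ideals of norm at most `t` in the class inverse to that of `J`. -/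
def inverseClassLE (J : Ideal (𝓞 K)) (t : ℝ) : Finset (Ideal (𝓞 K)) :=
  (idealsLE K t).filter (fun b => (b * J).IsPrincipal)

lemma mem_inverseClassLE {J : Ideal (𝓞 K)} {t : ℝ} {b : Ideal (𝓞 K)} :
    b ∈ inverseClassLE J t ↔ (b ≠ ⊥ ∧ (Ideal.absNorm b : ℝ) ≤ t) ∧ (b * J).IsPrincipal := by
  rw [inverseClassLE, Finset.mem_filter, mem_idealsLE]

/-- A uniform choice of generators of the principal ideals `b * J`. -/
lemma exists_generators (J : Ideal (𝓞 K)) (hJ : J ≠ ⊥) :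
    ∃ g : Ideal (𝓞 K) → 𝓞 K, ∀ t, ∀ b ∈ inverseClassLE J t,
      Ideal.span {g b} = b * J ∧ g b ≠ 0 ∧ g b ∈ J ∧
      (Ideal.absNorm (Ideal.span {g b}) : ℝ) = Ideal.absNorm b * Ideal.absNorm J := by
  have hg : ∀ b : Ideal (𝓞 K), ∃ x : 𝓞 K, (b * J).IsPrincipal → Ideal.span {x} = b * J := by
    intro b
    by_cases h : (b * J).IsPrincipal
    · obtain ⟨x, hx⟩ := h.principal
      exact ⟨x, fun _ => hx.symm⟩
    · exact ⟨0, fun h' => absurd h' h⟩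
  choose g hg using hg
  refine ⟨g, fun t b hb => ?_⟩
  obtain ⟨⟨hb1, -⟩, hb2⟩ := mem_inverseClassLE.mp hb
  have h := hg b hb2
  refine ⟨h, fun h0 => ?_, ?_, ?_⟩
  · have h1 : b * J = ⊥ := by rw [← h]; exact Ideal.span_singleton_eq_bot.mpr h0
    exact (mul_ne_zero hb1 hJ) h1
  · have h1 : g b ∈ b * J := by rw [← h]; exact Ideal.mem_span_singleton_self (g b)
    have h2 : b * J ≤ J := Ideal.mul_le_right
    exact h2 h1
  · rw [h, absNorm_mul_cast]

/-- The comparison within one ideal class, by mass transport: each ideal `b` of norm at most `t`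
with `b * J` principal spreads a unit mass evenly over the nonzero points of `J` in the box of
norm `u * N J` shaped like a generator of `b * J`. -/
lemma class_count_le (J : Ideal (𝓞 K)) (hJ : J ≠ ⊥) {u t : ℝ}
    (hu : 2 ^ Module.finrank ℚ K * (absDisc K : ℝ) < u) (hut : u ≤ t) :
    ((inverseClassLE J t).card : ℝ) ≤
      ∑ c ∈ inverseClassLE J u,
        2 * (6 * Real.exp 1) ^ Module.finrank ℚ K * (t / u) *
          (2 + Real.log (u / Ideal.absNorm c)) ^ Module.finrank ℚ K := by
  have hu0 : 0 < u := lt_of_le_of_lt (by positivity) hu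
  have hNJ := one_le_absNorm hJ
  set V := u * (Ideal.absNorm J : ℝ) with hVdef
  have hV : 0 < V := by positivity
  obtain ⟨g, hgB⟩ := exists_generators J hJ
  have hcof : ∀ z : 𝓞 K, ∃ c : Ideal (𝓞 K), z ∈ J → c * J = Ideal.span {z} := by
    intro z
    by_cases h : z ∈ J
    · obtain ⟨c, hc⟩ := Ideal.dvd_iff_le.mpr ((Ideal.span_singleton_le_iff_mem J).mpr h)
      exact ⟨c, fun _ => by rw [hc, mul_comm]⟩
    · exact ⟨⊥, fun h' => absurd h' h⟩
  choose cof hcof using hcof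
  let Z : Ideal (𝓞 K) → Finset (𝓞 K) := fun b => boxPts J (rad V (g b))
  have hmass : ((inverseClassLE J t).card : ℝ) = ∑ q ∈ (inverseClassLE J t).sigma Z, ((Z q.1).card : ℝ)⁻¹ := by
    rw [Finset.sum_sigma, Finset.card_eq_sum_ones]
    push_cast
    refine Finset.sum_congr rfl fun b hb => ?_
    have hne : (Z b).Nonempty := boxPts_nonempty J hJ _ (rad_pos hV (hgB t b hb).2.1) hu
      (prod_rad hV (hgB t b hb).2.1)
    have : ((Z b).card : ℝ) ≠ 0 := by exact_mod_cast (Finset.card_pos.mpr hne).ne'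
    rw [Finset.sum_const, nsmul_eq_mul, mul_inv_cancel₀ this]
  have hmaps : ∀ q ∈ (inverseClassLE J t).sigma Z, cof q.2 ∈ inverseClassLE J u := by
    rintro ⟨b, z⟩ hq
    obtain ⟨hb, hz⟩ := Finset.mem_sigma.mp hq
    simp only [Z] at hb hz
    obtain ⟨hzJ, hz0, hzw⟩ := mem_boxPts.mp hz
    have hc := hcof z hzJ
    have hprin : (cof z * J).IsPrincipal := by rw [hc]; exact ⟨⟨z, rfl⟩⟩
    refine mem_inverseClassLE.mpr ⟨⟨fun h0 => ?_, ?_⟩, hprin⟩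
    · dsimp only at h0
      rw [h0, Ideal.bot_mul, eq_comm, Ideal.span_singleton_eq_bot] at hc
      exact hz0 hc
    · have h1 : (Ideal.absNorm (Ideal.span {z}) : ℝ) ≤ V := by
        rw [← prod_place_eq, ← prod_rad hV (hgB t b hb).2.1]
        exact Finset.prod_le_prod (fun w _ => by have := place_pos hz0 w; positivity)
          fun w _ => pow_le_pow_left₀ (place_pos hz0 w).le (hzw w) _
      rw [← hc, absNorm_mul_cast, hVdef] at h1
      exact le_of_mul_le_mul_right h1 (by linarith)
  rw [hmass, ← Finset.sum_fiberwise_of_maps_to hmaps]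
  refine Finset.sum_le_sum fun c hc => ?_
  obtain ⟨hc1, hc2, hc3, hc4⟩ := hgB u c hc
  set F := ((inverseClassLE J t).sigma Z).filter (fun q => cof q.2 = c) with hF
  -- The points sent to `c` all generate `c * J`; units move them to the fixed generator `g c`, and
  -- move the boxes containing them along.
  have hη : ∀ q : (_ : Ideal (𝓞 K)) × 𝓞 K, ∃ η : (𝓞 K)ˣ, q ∈ F → q.2 * η = g c := by
    intro q
    by_cases hq : q ∈ F
    · obtain ⟨h1, h2⟩ := Finset.mem_filter.mp hq
      have hzJ := (mem_boxPts.mp (Finset.mem_sigma.mp h1).2).1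
      have h3 : Ideal.span {q.2} = Ideal.span {g c} := by rw [hc1, ← h2, hcof _ hzJ]
      obtain ⟨η, h⟩ := Ideal.span_singleton_eq_span_singleton.mp h3
      exact ⟨η, fun _ => h⟩
    · exact ⟨1, fun h => absurd h hq⟩
  choose η hη using hη
  let φ : ((_ : Ideal (𝓞 K)) × 𝓞 K) → 𝓞 K := fun q => g q.1 * η q
  have hFB : ∀ q ∈ F, q.1 ∈ inverseClassLE J t ∧ q.2 ∈ Z q.1 := fun q hq =>
    Finset.mem_sigma.mp (Finset.mem_filter.mp hq).1
  have hspan : ∀ q, Ideal.span {φ q} = Ideal.span {g q.1} := fun q =>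
    Ideal.span_singleton_mul_right_unit (η q).isUnit _
  have hinj : Set.InjOn φ F := by
    intro p hp q hq hpq
    have h1 : p.1 * J = q.1 * J := by
      rw [← (hgB t _ (hFB p hp).1).1, ← (hgB t _ (hFB q hq).1).1, ← hspan, ← hspan, hpq]
    have h2 : p.1 = q.1 := mul_right_cancel₀ hJ h1
    have h3 : (η p : 𝓞 K) = η q := by
      have h4 : g p.1 * η p = g q.1 * η q := hpq
      rw [h2] at h4
      exact mul_left_cancel₀ (hgB t _ (hFB q hq).1).2.1 h4
    have h5 : p.2 = q.2 := by
      have h6 := (hη p hp).trans (hη q hq).symm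
      rw [h3] at h6
      exact mul_right_cancel₀ (η q).ne_zero h6
    exact Sigma.ext h2 (heq_of_eq h5)
  have hsum : ∑ q ∈ F, ((Z q.1).card : ℝ)⁻¹ =
      ∑ x ∈ F.image φ, ((boxPts J (rad V x)).card : ℝ)⁻¹ := by
    rw [Finset.sum_image hinj]
    refine Finset.sum_congr rfl fun q _ => ?_
    simp only [φ, Z, card_boxPts_mul_unit]
  have hNc := one_le_absNorm (mem_inverseClassLE.mp hc).1.1
  have hcu := (mem_inverseClassLE.mp hc).1.2
  have hlog : V / Ideal.absNorm (Ideal.span {g c}) = u / Ideal.absNorm c := by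
    rw [hc4, hVdef]; field_simp
  rw [hsum, ← hlog]
  refine received_le J hV ((one_le_div hu0).mpr hut) hc3 hc2 ?_ _ ?_
  · rw [hc4, hVdef]; gcongr
  · intro x hx
    obtain ⟨q, hq, rfl⟩ := Finset.mem_image.mp hx
    obtain ⟨hqB, hqZ⟩ := hFB q hq
    obtain ⟨h1, h2, h3, h4⟩ := hgB t _ hqB
    have hqt := (mem_inverseClassLE.mp hqB).1.2
    refine ⟨J.mul_mem_right _ h3, mul_ne_zero h2 (η q).ne_zero, ?_, ?_⟩
    · rw [hspan, h4, hVdef, ← mul_assoc, div_mul_cancel₀ _ hu0.ne']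
      gcongr
    · rw [mem_boxPts]
      refine ⟨hc3, hc2, fun w => ?_⟩
      rw [← hη q hq, rad_mul_unit, place_mul]
      exact mul_le_mul_of_nonneg_right ((mem_boxPts.mp hqZ).2.2 w) (apply_nonneg _ _)

/-- Growth of the ideal-counting function, uniform in the field: beyond `2 ^ n · D_K` it is
controlled by a Riesz mean at any earlier point, losing only a constant depending on the degree. -/
lemma count_le {u t : ℝ} (hu : 2 ^ Module.finrank ℚ K * (absDisc K : ℝ) < u) (hut : u ≤ t) :
    ((idealsLE K t).card : ℝ) ≤
      ∑ c ∈ idealsLE K u, 2 * (6 * Real.exp 1) ^ Module.finrank ℚ K * (t / u) *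
          (2 + Real.log (u / Ideal.absNorm c)) ^ Module.finrank ℚ K := by
  let cl : Ideal (𝓞 K) → ClassGroup (𝓞 K) := fun b =>
    if h : b ∈ nonZeroDivisors (Ideal (𝓞 K)) then ClassGroup.mk0 ⟨b, h⟩ else 1
  have hrep : ∀ k : ClassGroup (𝓞 K), ∃ J : Ideal (𝓞 K), J ≠ ⊥ ∧
      ∀ t, (idealsLE K t).filter (fun b => cl b = k) =
        inverseClassLE J t := by
    intro k
    obtain ⟨J, hJ⟩ := ClassGroup.mk0_surjective k⁻¹
    refine ⟨J, nonZeroDivisors.coe_ne_zero J, fun t => Finset.filter_congr fun b hb => ?_⟩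
    have hb0 : b ∈ nonZeroDivisors (Ideal (𝓞 K)) :=
      mem_nonZeroDivisors_of_ne_zero (mem_idealsLE.mp hb).1
    simp only [cl, dif_pos hb0]
    rw [← ClassGroup.mk0_eq_one_iff (mul_mem hb0 J.2)]
    have : (⟨b * J, mul_mem hb0 J.2⟩ : nonZeroDivisors (Ideal (𝓞 K))) = ⟨b, hb0⟩ * J := rfl
    rw [this, map_mul, hJ, mul_inv_eq_one]
  have h1 : ((idealsLE K t).card : ℝ) =
      ∑ k : ClassGroup (𝓞 K), (((idealsLE K t).filter (fun b => cl b = k)).card : ℝ) := by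
    rw [Finset.card_eq_sum_card_fiberwise (f := cl) (t := Finset.univ) (fun _ _ => by simp)]
    push_cast; rfl
  rw [h1, ← Finset.sum_fiberwise (idealsLE K u) cl]
  refine Finset.sum_le_sum fun k _ => ?_
  obtain ⟨J, hJ0, hJ⟩ := hrep k
  rw [hJ, hJ]
  exact class_count_le J hJ0 hu hut

end Transport

/-! ### Averaging and the logarithmic mean -/

section Averaging

/-- Partial summation in its cheapest form: cutting `(T, X]` into cells `(T e ^ j, T e ^ (j + 1)]`
loses only the factor `e`. -/
lemma sum_div_le {ι : Type*} (s : Finset ι) (w N : ι → ℝ) {κ T X : ℝ} (hT : 0 < T)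
    (hw : ∀ i ∈ s, 0 ≤ w i) (hκ0 : 0 ≤ κ) (hκ : ∀ t, T ≤ t → ∑ i ∈ s with N i ≤ t, w i ≤ κ * t)
    (hTX : T ≤ X) (hs : ∀ i ∈ s, T ≤ N i ∧ N i ≤ X) :
    ∑ i ∈ s, w i / N i ≤ Real.exp 1 * κ * (1 + Real.log (X / T)) := by
  let q : ι → ℕ := fun i => ⌊Real.log (N i / T)⌋₊
  have h0 : ∀ i ∈ s, 0 ≤ Real.log (N i / T) := fun i hi =>
    Real.log_nonneg ((one_le_div hT).mpr (hs i hi).1)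
  have hX0 : 0 ≤ Real.log (X / T) := Real.log_nonneg ((one_le_div hT).mpr hTX)
  have hmaps : ∀ i ∈ s, q i ∈ Finset.range (⌊Real.log (X / T)⌋₊ + 1) := by
    intro i hi
    rw [Finset.mem_range, Nat.lt_succ_iff]
    apply Nat.floor_le_floor
    have : 0 < N i := hT.trans_le (hs i hi).1
    apply Real.log_le_log (by positivity)
    gcongr
    exact (hs i hi).2
  rw [← Finset.sum_fiberwise_of_maps_to hmaps]
  have hcell : ∀ j ∈ Finset.range (⌊Real.log (X / T)⌋₊ + 1),
      ∑ i ∈ s with q i = j, w i / N i ≤ Real.exp 1 * κ := by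
    intro j _
    have hb : ∀ i ∈ s.filter (fun i => q i = j),
        T * Real.exp j ≤ N i ∧ N i ≤ T * Real.exp (j + 1) := by
      intro i hi
      obtain ⟨his, hq⟩ := Finset.mem_filter.mp hi
      have hN : 0 < N i / T := div_pos (hT.trans_le (hs i his).1) hT
      have h1 : (j : ℝ) ≤ Real.log (N i / T) := by
        rw [← hq]; exact Nat.floor_le (h0 i his)
      have h2 : Real.log (N i / T) ≤ j + 1 := by
        rw [← hq]; exact (Nat.lt_floor_add_one _).le
      rw [Real.le_log_iff_exp_le hN, le_div_iff₀ hT] at h1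
      rw [Real.log_le_iff_le_exp hN, div_le_iff₀ hT] at h2
      constructor <;> linarith
    have hE : 0 < T * Real.exp j := by positivity
    calc ∑ i ∈ s with q i = j, w i / N i
        ≤ ∑ i ∈ s with q i = j, w i / (T * Real.exp j) := by
          refine Finset.sum_le_sum fun i hi => ?_
          exact div_le_div_of_nonneg_left (hw i (Finset.mem_filter.mp hi).1) hE (hb i hi).1
      _ = (∑ i ∈ s with q i = j, w i) / (T * Real.exp j) := (Finset.sum_div ..).symm
      _ ≤ (∑ i ∈ s with N i ≤ T * Real.exp (j + 1), w i) / (T * Real.exp j) := by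
          refine div_le_div_of_nonneg_right ?_ hE.le
          refine Finset.sum_le_sum_of_subset_of_nonneg (fun i hi => ?_) (fun i hi _ => ?_)
          · exact Finset.mem_filter.mpr ⟨(Finset.mem_filter.mp hi).1, (hb i hi).2⟩
          · exact hw i (Finset.mem_filter.mp hi).1
      _ ≤ (κ * (T * Real.exp (j + 1))) / (T * Real.exp j) := by
          gcongr
          exact hκ _ (le_mul_of_one_le_right hT.le (Real.one_le_exp (by positivity)))
      _ = Real.exp 1 * κ := by
          rw [Real.exp_add]; field_simp
  refine (Finset.sum_le_sum hcell).trans ?_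
  rw [Finset.sum_const, Finset.card_range, nsmul_eq_mul, mul_comm]
  gcongr
  push_cast
  have := Nat.floor_le hX0
  linarith

lemma sum_exp_half_le (N : ℕ) :
    ∑ j ∈ Finset.range (N + 1), Real.exp ((j : ℝ) / 2) ≤ 3 * Real.exp ((N : ℝ) / 2) := by
  induction N with
  | zero => simp
  | succ N ih =>
    rw [Finset.sum_range_succ]
    have h : Real.exp (((N + 1 : ℕ) : ℝ) / 2) = Real.exp ((N : ℝ) / 2) * Real.exp (1 / 2) := by
      rw [← Real.exp_add]; congr 1; push_cast; ring
    have h2 : (3 : ℝ) / 2 ≤ Real.exp (1 / 2) := by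
      have := Real.add_one_le_exp (1 / 2 : ℝ); linarith
    rw [h]
    nlinarith [Real.exp_pos ((N : ℝ) / 2)]

lemma sum_exp_half_le_three (m : ℕ) (a : ℝ) :
    ∑ j ∈ Finset.range (m + 1) with ((j : ℕ) : ℝ) ≤ a, Real.exp (((j : ℝ) - a) / 2) ≤ 3 := by
  rcases lt_or_ge a 0 with ha | ha
  · rw [Finset.filter_false_of_mem]
    · simp
    · intro j _ h
      have : (0 : ℝ) ≤ j := by positivity
      linarith
  calc ∑ j ∈ Finset.range (m + 1) with ((j : ℕ) : ℝ) ≤ a, Real.exp (((j : ℝ) - a) / 2)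
      ≤ ∑ j ∈ Finset.range (⌊a⌋₊ + 1), Real.exp (((j : ℝ) - a) / 2) := by
        refine Finset.sum_le_sum_of_subset_of_nonneg (fun j hj => ?_)
          (fun _ _ _ => (Real.exp_pos _).le)
        rw [Finset.mem_range, Nat.lt_succ_iff]
        exact Nat.le_floor (Finset.mem_filter.mp hj).2
    _ = (∑ j ∈ Finset.range (⌊a⌋₊ + 1), Real.exp ((j : ℝ) / 2)) * Real.exp (-a / 2) := by
        rw [Finset.sum_mul]
        refine Finset.sum_congr rfl fun j _ => ?_
        rw [← Real.exp_add]; congr 1; ring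
    _ ≤ 3 * Real.exp ((⌊a⌋₊ : ℝ) / 2) * Real.exp (-a / 2) := by
        gcongr
        exact sum_exp_half_le _
    _ = 3 * Real.exp (((⌊a⌋₊ : ℝ) - a) / 2) := by
        rw [mul_assoc, ← Real.exp_add]; congr 2; ring
    _ ≤ 3 * 1 := by
        gcongr
        have := Nat.floor_le ha
        exact Real.exp_le_one_iff.mpr (by linarith)
    _ = 3 := by norm_num

lemma two_add_pow_le (n : ℕ) {d : ℝ} (hd : 0 ≤ d) :
    (2 + d) ^ n ≤ n.factorial * 2 ^ n * Real.exp 1 * Real.exp (d / 2) := by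
  have h := Real.pow_div_factorial_le_exp ((2 + d) / 2) (by positivity) n
  rw [div_pow, div_div, div_le_iff₀ (by positivity)] at h
  rw [show (2 + d) / 2 = 1 + d / 2 by ring, Real.exp_add] at h
  linarith

variable {K : Type} [Field K] [NumberField K]

/-- The sum of `1 / N b` over the nonzero ideals `b` of norm at most `t`. -/
def recipSum (K : Type) [Field K] [NumberField K] (t : ℝ) : ℝ :=
  ∑ b ∈ idealsLE K t, (1 : ℝ) / Ideal.absNorm b

lemma recipSum_nonneg (t : ℝ) : 0 ≤ recipSum K t :=
  Finset.sum_nonneg fun _ _ => by positivity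

/-- The constant in `card_idealsLE_le`. -/
def cAvg (n : ℕ) : ℝ := 2 * (6 * Real.exp 1) ^ n * (n.factorial * 2 ^ n * Real.exp 1)

lemma cAvg_pos (n : ℕ) : 0 < cAvg n := by
  have := n.factorial_pos
  unfold cAvg
  positivity

/-- Averaging `count_le` over `u = T, T / e, T / e ^ 2, …` down to `√T` turns the Riesz means into
the logarithmic mean `recipSum K T` and gains the factor `log T`. -/
lemma card_idealsLE_le {T t : ℝ} (hT1 : 1 ≤ T)
    (hT : 2 ^ Module.finrank ℚ K * (absDisc K : ℝ) < Real.sqrt T) (hTt : T ≤ t) :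
    ((idealsLE K t).card : ℝ) ≤
      6 * cAvg (Module.finrank ℚ K) * (recipSum K T / Real.log T) * t := by
  set n := Module.finrank ℚ K with hn
  set m := ⌊Real.log T / 2⌋₊ with hm
  have hT0 : 0 < T := by linarith
  have ht0 : 0 < t := by linarith
  have hlog : 0 ≤ Real.log T := Real.log_nonneg hT1
  have hD : (1 : ℝ) ≤ absDisc K := by
    have := Int.natAbs_pos.mpr (discr_ne_zero K)
    exact_mod_cast this
  have hlogpos : 0 < Real.log T := by
    apply Real.log_pos
    by_contra! h
    have h1 : Real.sqrt T ≤ 1 := Real.sqrt_le_one.mpr h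
    have h2 : (1 : ℝ) ≤ 2 ^ n := one_le_pow₀ (by norm_num)
    nlinarith
  have hone : ∀ j ∈ Finset.range (m + 1), ((idealsLE K t).card : ℝ) ≤
      ∑ c ∈ idealsLE K T, if (j : ℝ) ≤ Real.log (T / Ideal.absNorm c) then
        cAvg n * t * (1 / Ideal.absNorm c) *
          Real.exp (((j : ℝ) - Real.log (T / Ideal.absNorm c)) / 2) else 0 := by
    intro j hj
    have hjm : (j : ℝ) ≤ Real.log T / 2 := by
      have h1 : (j : ℝ) ≤ m := by
        exact_mod_cast Nat.lt_succ_iff.mp (Finset.mem_range.mp hj)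
      exact h1.trans (Nat.floor_le (by positivity))
    have hu : Real.sqrt T ≤ T * Real.exp (-j) := by
      have h1 : Real.sqrt T = T * Real.exp (-(Real.log T / 2)) := by
        rw [Real.sqrt_eq_rpow, Real.rpow_def_of_pos hT0]
        nth_rewrite 2 [← Real.exp_log hT0]
        rw [← Real.exp_add]; congr 1; ring
      rw [h1]
      gcongr
    have huT : T * Real.exp (-j) ≤ T :=
      mul_le_of_le_one_right hT0.le (Real.exp_le_one_iff.mpr (by simp))
    refine (count_le (hT.trans_le hu) (huT.trans hTt)).trans ?_
    rw [← Finset.sum_filter]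
    have key : ∀ c : Ideal (𝓞 K), c ≠ ⊥ → ((Ideal.absNorm c : ℝ) ≤ T * Real.exp (-j) ↔
        (j : ℝ) ≤ Real.log (T / Ideal.absNorm c)) := by
      intro c hc
      have := one_le_absNorm hc
      rw [Real.le_log_iff_exp_le (by positivity), le_div_iff₀ (by positivity), Real.exp_neg,
        ← div_eq_mul_inv, le_div_iff₀ (Real.exp_pos _), mul_comm]
    have hset : idealsLE K (T * Real.exp (-j)) =
        (idealsLE K T).filter (fun c => (j : ℝ) ≤ Real.log (T / Ideal.absNorm c)) := by
      ext c
      rw [Finset.mem_filter, mem_idealsLE, mem_idealsLE]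
      constructor
      · rintro ⟨h1, h2⟩
        exact ⟨⟨h1, h2.trans huT⟩, (key c h1).mp h2⟩
      · rintro ⟨⟨h1, -⟩, h2⟩
        exact ⟨h1, (key c h1).mpr h2⟩
    rw [hset]
    refine Finset.sum_le_sum fun c hc => ?_
    obtain ⟨hcT, hcj⟩ := Finset.mem_filter.mp hc
    have hc1 := one_le_absNorm (mem_idealsLE.mp hcT).1
    have hd : Real.log (T * Real.exp (-j) / Ideal.absNorm c) =
        Real.log (T / Ideal.absNorm c) - j := by
      rw [mul_div_right_comm, Real.log_mul (by positivity) (by positivity), Real.log_exp]; ring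
    have htu : t / (T * Real.exp (-j)) =
        t * (1 / Ideal.absNorm c) * Real.exp (-(Real.log (T / Ideal.absNorm c) - j)) := by
      rw [neg_sub, Real.exp_sub, Real.exp_log (by positivity), Real.exp_neg]
      field_simp
    rw [hd, htu]
    set d := Real.log (T / Ideal.absNorm c) - j with hdd
    have hd0 : 0 ≤ d := by linarith
    calc 2 * (6 * Real.exp 1) ^ n * (t * (1 / Ideal.absNorm c) * Real.exp (-d)) * (2 + d) ^ n
        ≤ 2 * (6 * Real.exp 1) ^ n * (t * (1 / Ideal.absNorm c) * Real.exp (-d)) *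
          (n.factorial * 2 ^ n * Real.exp 1 * Real.exp (d / 2)) := by
          gcongr
          exact two_add_pow_le n hd0
      _ = cAvg n * t * (1 / Ideal.absNorm c) * (Real.exp (-d) * Real.exp (d / 2)) := by
          rw [cAvg]; ring
      _ = _ := by
          rw [← Real.exp_add]; congr 2; rw [hdd]; ring
  have hsum := Finset.sum_le_sum hone
  rw [Finset.sum_const, Finset.card_range, nsmul_eq_mul, Finset.sum_comm] at hsum
  have hinner : ∀ c ∈ idealsLE K T, (∑ j ∈ Finset.range (m + 1),
      if (j : ℝ) ≤ Real.log (T / Ideal.absNorm c) then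
        cAvg n * t * (1 / Ideal.absNorm c) *
          Real.exp (((j : ℝ) - Real.log (T / Ideal.absNorm c)) / 2) else 0) ≤
      3 * cAvg n * t * (1 / Ideal.absNorm c) := by
    intro c _
    have := cAvg_pos n
    rw [← Finset.sum_filter, ← Finset.mul_sum]
    calc _ ≤ cAvg n * t * (1 / Ideal.absNorm c) * 3 := by
          gcongr
          exact sum_exp_half_le_three _ _
      _ = _ := by ring
  have h2 := hsum.trans (Finset.sum_le_sum hinner)
  rw [← Finset.mul_sum, ← recipSum] at h2
  have hm1 : Real.log T / 2 ≤ ((m + 1 : ℕ) : ℝ) := by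
    push_cast; exact (Nat.lt_floor_add_one _).le
  have h3 : Real.log T / 2 * ((idealsLE K t).card : ℝ) ≤ 3 * cAvg n * t * recipSum K T :=
    le_trans (by gcongr) h2
  rw [show 6 * cAvg n * (recipSum K T / Real.log T) * t =
    (6 * cAvg n * t * recipSum K T) / Real.log T by ring, le_div_iff₀ hlogpos]
  linarith

/-- The constant in `recipSum_growth`. -/
def cGrowth (n : ℕ) : ℝ := 1 + Real.exp 1 * (6 * cAvg n)

lemma cGrowth_pos (n : ℕ) : 0 < cGrowth n := by
  have := cAvg_pos n
  unfold cGrowth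
  positivity

/-- Beyond a fixed power of the discriminant, `recipSum` grows at most like `log`, uniformly. -/
lemma recipSum_growth {T X : ℝ} (hTe : Real.exp 1 ≤ T)
    (hT : 2 ^ Module.finrank ℚ K * (absDisc K : ℝ) < Real.sqrt T) (hTX : T ≤ X) :
    recipSum K X ≤ cGrowth (Module.finrank ℚ K) * recipSum K T * (Real.log X / Real.log T) := by
  set n := Module.finrank ℚ K with hn
  have hT0 : 0 < T := (Real.exp_pos 1).trans_le hTe
  have hT1 : 1 ≤ T := (Real.one_le_exp zero_le_one).trans hTe
  have hlogT : 1 ≤ Real.log T := (Real.le_log_iff_exp_le hT0).mpr hTe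
  have hlogX : Real.log T ≤ Real.log X := Real.log_le_log hT0 hTX
  have hc := cAvg_pos n
  have hH := recipSum_nonneg (K := K) T
  set κ := 6 * cAvg n * (recipSum K T / Real.log T) with hκ
  have hκ0 : 0 ≤ κ := by positivity
  have hsplit : recipSum K X ≤ recipSum K T +
      ∑ b ∈ idealsLE K X with T ≤ (Ideal.absNorm b : ℝ), (1 : ℝ) / Ideal.absNorm b := by
    rw [recipSum, ← Finset.sum_filter_not_add_sum_filter (idealsLE K X)
      (fun b => T ≤ (Ideal.absNorm b : ℝ))]
    gcongr
    refine Finset.sum_le_sum_of_subset_of_nonneg (fun b hb => ?_) (fun _ _ _ => by positivity)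
    obtain ⟨h1, h2⟩ := Finset.mem_filter.mp hb
    exact mem_idealsLE.mpr ⟨(mem_idealsLE.mp h1).1, (not_le.mp h2).le⟩
  have htail := sum_div_le ((idealsLE K X).filter (fun b => T ≤ (Ideal.absNorm b : ℝ)))
    (fun _ => 1) (fun b => (Ideal.absNorm b : ℝ)) (κ := κ) hT0 (fun _ _ => zero_le_one) hκ0
    (fun t ht => by
      refine le_trans ?_ (card_idealsLE_le hT1 hT ht)
      rw [Finset.sum_const, nsmul_eq_mul, mul_one]
      norm_cast
      refine Finset.card_le_card fun b hb => ?_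
      obtain ⟨h1, h2⟩ := Finset.mem_filter.mp hb
      exact mem_idealsLE.mpr ⟨(mem_idealsLE.mp (Finset.mem_filter.mp h1).1).1, h2⟩) hTX
    (fun b hb => by
      obtain ⟨h1, h2⟩ := Finset.mem_filter.mp hb
      exact ⟨h2, (mem_idealsLE.mp h1).2⟩)
  have hlg : 1 + Real.log (X / T) ≤ Real.log X := by
    rw [Real.log_div (by linarith) hT0.ne']; linarith
  calc recipSum K X ≤ recipSum K T + Real.exp 1 * κ * Real.log X :=
        hsplit.trans (by gcongr; exact htail.trans (by gcongr))
    _ ≤ recipSum K T * (Real.log X / Real.log T) + Real.exp 1 * κ * Real.log X := by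
        gcongr
        exact le_mul_of_one_le_right hH ((one_le_div (by linarith)).mpr hlogX)
    _ = _ := by rw [hκ, cGrowth]; field_simp

end Averaging

/-! ### Prime ideals and rational primes -/

section Primes

variable {K : Type} [Field K] [NumberField K]

/-- The finite set of nonzero prime ideals of norm at most `t`. -/
def primeIdealsLE (K : Type) [Field K] [NumberField K] (t : ℝ) : Finset (Ideal (𝓞 K)) :=
  (idealsLE K t).filter (fun 𝔭 => 𝔭.IsPrime)

lemma mem_primeIdealsLE {t : ℝ} {𝔭 : Ideal (𝓞 K)} :
    𝔭 ∈ primeIdealsLE K t ↔ (𝔭 ≠ ⊥ ∧ (Ideal.absNorm 𝔭 : ℝ) ≤ t) ∧ 𝔭.IsPrime := by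
  rw [primeIdealsLE, Finset.mem_filter, mem_idealsLE]

lemma two_le_absNorm {𝔭 : Ideal (𝓞 K)} (h0 : 𝔭 ≠ ⊥) (hp : 𝔭.IsPrime) :
    (2 : ℝ) ≤ Ideal.absNorm 𝔭 := by
  have h1 : Ideal.absNorm 𝔭 ≠ 0 := Ideal.absNorm_eq_zero_iff.not.mpr h0
  have h2 : Ideal.absNorm 𝔭 ≠ 1 := Ideal.absNorm_eq_one_iff.not.mpr hp.ne_top
  have : 2 ≤ Ideal.absNorm 𝔭 := by omega
  exact_mod_cast this

lemma absNorm_prod (s : Finset (Ideal (𝓞 K))) :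
    ((Ideal.absNorm (∏ 𝔭 ∈ s, 𝔭) : ℕ) : ℝ) = ∏ 𝔭 ∈ s, (Ideal.absNorm 𝔭 : ℝ) := by
  have h : Ideal.absNorm (∏ 𝔭 ∈ s, 𝔭) = ∏ 𝔭 ∈ s, Ideal.absNorm 𝔭 :=
    map_prod Ideal.absNorm (fun 𝔭 => 𝔭) s
  rw [h, Nat.cast_prod]

/-- At most `n` prime ideals contain a given rational prime `p`: their product divides `(p)`, whose
norm is `p ^ n`. -/
lemma card_primes_over_le (p : ℕ) (hp : p.Prime) (s : Finset (Ideal (𝓞 K)))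
    (hs : ∀ 𝔭 ∈ s, 𝔭 ≠ ⊥ ∧ 𝔭.IsPrime ∧ (p : 𝓞 K) ∈ 𝔭 ∧ p ≤ Ideal.absNorm 𝔭) :
    s.card ≤ Module.finrank ℚ K := by
  have hdvd : ∏ 𝔭 ∈ s, 𝔭 ∣ Ideal.span {(p : 𝓞 K)} := by
    refine Finset.prod_primes_dvd _ (fun 𝔭 h => ?_) (fun 𝔭 h => ?_)
    · exact Ideal.prime_of_isPrime (hs 𝔭 h).1 (hs 𝔭 h).2.1
    · exact Ideal.dvd_span_singleton.mpr (hs 𝔭 h).2.2.1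
  have hnorm : Ideal.absNorm (Ideal.span {(p : 𝓞 K)}) = p ^ Module.finrank ℚ K := by
    rw [Ideal.absNorm_span_natCast, RingOfIntegers.rank]
  have h1 := Ideal.absNorm_dvd_absNorm_of_le (Ideal.dvd_iff_le.mp hdvd)
  rw [hnorm] at h1
  have h2 := Nat.le_of_dvd (pow_pos hp.pos _) h1
  have h3 : Ideal.absNorm (∏ 𝔭 ∈ s, 𝔭) = ∏ 𝔭 ∈ s, Ideal.absNorm 𝔭 :=
    map_prod Ideal.absNorm (fun 𝔭 => 𝔭) s
  rw [h3] at h2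
  have h4 : p ^ s.card ≤ ∏ 𝔭 ∈ s, Ideal.absNorm 𝔭 :=
    Finset.pow_card_le_prod _ _ _ fun 𝔭 h => (hs 𝔭 h).2.2.2
  exact (Nat.pow_le_pow_iff_right hp.one_lt).mp (h4.trans h2)

/-- Sums over prime ideals are at most `n` times the corresponding sums over rational primes. -/
lemma sum_primes_le (g : ℕ → ℝ) (hg0 : ∀ m, 0 ≤ g m)
    (hg : ∀ p f : ℕ, p.Prime → 0 < f → g (p ^ f) ≤ g p) (x : ℝ) :
    ∑ 𝔭 ∈ primeIdealsLE K x, g (Ideal.absNorm 𝔭) ≤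
      Module.finrank ℚ K * ∑ p ∈ Finset.Ioc 0 ⌊x⌋₊ with p.Prime, g p := by
  have hex : ∀ 𝔭 ∈ primeIdealsLE K x, ∃ f, 0 < f ∧ (Ideal.absNorm 𝔭).minFac.Prime ∧
      (((Ideal.absNorm 𝔭).minFac : ℕ) : 𝓞 K) ∈ 𝔭 ∧
      Ideal.absNorm 𝔭 = (Ideal.absNorm 𝔭).minFac ^ f := by
    intro 𝔭 h
    obtain ⟨⟨h0, -⟩, hp⟩ := mem_primeIdealsLE.mp h
    have : 𝔭.IsMaximal := hp.isMaximal h0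
    obtain ⟨p, f, hf, hmem, hpp, hN⟩ := Ideal.exists_prime_and_absNorm_eq_pow 𝔭
    have hmin : (Ideal.absNorm 𝔭).minFac = p := by rw [hN]; exact hpp.pow_minFac hf.ne'
    rw [hmin]
    exact ⟨f, hf, hpp, hmem, hN⟩
  have hle : ∀ 𝔭 ∈ primeIdealsLE K x, (Ideal.absNorm 𝔭).minFac ≤ Ideal.absNorm 𝔭 := by
    intro 𝔭 h
    have := one_le_absNorm (mem_primeIdealsLE.mp h).1.1
    exact Nat.minFac_le (by exact_mod_cast this)
  have hmaps : ∀ 𝔭 ∈ primeIdealsLE K x,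
      (Ideal.absNorm 𝔭).minFac ∈ (Finset.Ioc 0 ⌊x⌋₊).filter Nat.Prime := by
    intro 𝔭 h
    obtain ⟨f, -, hpp, -, -⟩ := hex 𝔭 h
    refine Finset.mem_filter.mpr ⟨Finset.mem_Ioc.mpr ⟨hpp.pos, Nat.le_floor ?_⟩, hpp⟩
    refine le_trans ?_ (mem_primeIdealsLE.mp h).1.2
    exact_mod_cast hle 𝔭 h
  rw [← Finset.sum_fiberwise_of_maps_to hmaps, Finset.mul_sum]
  refine Finset.sum_le_sum fun p hp => ?_
  have hpp := (Finset.mem_filter.mp hp).2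
  calc ∑ 𝔭 ∈ primeIdealsLE K x with (Ideal.absNorm 𝔭).minFac = p, g (Ideal.absNorm 𝔭)
      ≤ ∑ 𝔭 ∈ primeIdealsLE K x with (Ideal.absNorm 𝔭).minFac = p, g p := by
        refine Finset.sum_le_sum fun 𝔭 h => ?_
        obtain ⟨h1, h2⟩ := Finset.mem_filter.mp h
        obtain ⟨f, hf, -, -, hN⟩ := hex 𝔭 h1
        rw [h2] at hN
        rw [hN]
        exact hg p f hpp hf
    _ ≤ Module.finrank ℚ K * g p := by
        rw [Finset.sum_const, nsmul_eq_mul]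
        gcongr
        · exact hg0 p
        · refine card_primes_over_le p hpp _ fun 𝔭 h => ?_
          obtain ⟨h1, h2⟩ := Finset.mem_filter.mp h
          obtain ⟨f, -, -, hmem, -⟩ := hex 𝔭 h1
          have := hle 𝔭 h1
          rw [h2] at hmem this
          obtain ⟨⟨h3, -⟩, h4⟩ := mem_primeIdealsLE.mp h1
          exact ⟨h3, h4, hmem, this⟩

lemma sum_nat_primes_log_div_le {x : ℝ} (hx : 1 ≤ x) :
    ∑ p ∈ Finset.Ioc 0 ⌊x⌋₊ with p.Prime, Real.log p / p ≤
      Real.exp 1 * Real.log 4 * (1 + Real.log x) := by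
  have h := sum_div_le ((Finset.Ioc 0 ⌊x⌋₊).filter Nat.Prime) (fun p => Real.log p)
    (fun p => (p : ℝ)) (κ := Real.log 4) (T := 1) (X := x) one_pos
    (fun p _ => Real.log_natCast_nonneg p) (Real.log_nonneg (by norm_num))
    (fun t ht => by
      refine le_trans ?_ (Chebyshev.theta_le_log4_mul_x (by linarith : (0 : ℝ) ≤ t))
      rw [Chebyshev.theta]
      refine Finset.sum_le_sum_of_subset_of_nonneg (fun p hp => ?_)
        (fun p _ _ => Real.log_natCast_nonneg p)
      obtain ⟨h1, h2⟩ := Finset.mem_filter.mp hp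
      obtain ⟨h3, h4⟩ := Finset.mem_filter.mp h1
      exact Finset.mem_filter.mpr ⟨Finset.mem_Ioc.mpr ⟨h4.pos, Nat.le_floor h2⟩, h4⟩) hx
    (fun p hp => by
      obtain ⟨h1, h2⟩ := Finset.mem_filter.mp hp
      obtain ⟨h3, h4⟩ := Finset.mem_Ioc.mp h1
      exact ⟨by exact_mod_cast h3, (Nat.le_floor_iff (by linarith)).mp h4⟩)
  rwa [div_one] at h

lemma sum_inv_sq_succ_le (N : ℕ) :
    ∑ m ∈ Finset.Ioc 0 (N + 1), (1 : ℝ) / (m : ℝ) ^ 2 ≤ 2 - 1 / (N + 1) := by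
  induction N with
  | zero => norm_num
  | succ N ih =>
    rw [Finset.sum_Ioc_succ_top (Nat.zero_le _)]
    have h : (1 : ℝ) / ((N + 1 + 1 : ℕ) : ℝ) ^ 2 ≤ 1 / (N + 1) - 1 / ((N + 1 : ℕ) + 1) := by
      push_cast
      rw [div_sub_div _ _ (by positivity) (by positivity)]
      rw [div_le_div_iff₀ (by positivity) (by positivity)]
      nlinarith
    linarith

lemma sum_inv_sq_le (N : ℕ) : ∑ m ∈ Finset.Ioc 0 N, (1 : ℝ) / (m : ℝ) ^ 2 ≤ 2 := by
  cases N with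
  | zero => norm_num
  | succ N =>
    have : (0 : ℝ) ≤ 1 / (N + 1) := by positivity
    linarith [sum_inv_sq_succ_le N]

/-- The constant in `sum_primes_log_div_le`. -/
def cLog (n : ℕ) : ℝ := n * (Real.exp 1 * Real.log 4 * 2)

lemma cLog_nonneg (n : ℕ) : 0 ≤ cLog n := by
  have := Real.log_nonneg (show (1 : ℝ) ≤ 4 by norm_num)
  unfold cLog
  positivity

/-- The upper bound in Mertens' first theorem, up to a constant factor. Since only the degree enters
the comparison with rational primes, it holds for every `x ≥ e`, whatever the discriminant. -/
lemma sum_primes_log_div_le {x : ℝ} (hx : Real.exp 1 ≤ x) :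
    ∑ 𝔭 ∈ primeIdealsLE K x, Real.log (Ideal.absNorm 𝔭) / Ideal.absNorm 𝔭 ≤
      cLog (Module.finrank ℚ K) * Real.log x := by
  have hx1 : 1 ≤ x := (Real.one_le_exp zero_le_one).trans hx
  have hl : 1 ≤ Real.log x := (Real.le_log_iff_exp_le (by linarith)).mpr hx
  have hl4 := Real.log_nonneg (show (1 : ℝ) ≤ 4 by norm_num)
  have h := sum_primes_le (K := K) (fun m => Real.log m / m)
    (fun m => div_nonneg (Real.log_natCast_nonneg m) (Nat.cast_nonneg m))
    (fun p f hp hf => by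
      have hp0 : (0 : ℝ) < p := by exact_mod_cast hp.pos
      obtain ⟨e, rfl⟩ := Nat.exists_eq_succ_of_ne_zero hf.ne'
      have h1 : ((e + 1 : ℕ) : ℝ) ≤ (p : ℝ) ^ e := by
        have h2 : e + 1 ≤ 2 ^ e := Nat.lt_two_pow_self
        exact_mod_cast h2.trans (Nat.pow_le_pow_left hp.two_le e)
      have h3 := Real.log_natCast_nonneg p
      push_cast at h1 ⊢
      rw [Real.log_pow, pow_succ, div_le_div_iff₀ (by positivity) hp0]
      push_cast
      calc ((e : ℝ) + 1) * Real.log p * p ≤ (p : ℝ) ^ e * Real.log p * p := by gcongr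
        _ = _ := by ring) x
  refine h.trans ?_
  rw [cLog, mul_assoc (_ : ℝ) _ (Real.log x)]
  gcongr
  calc _ ≤ Real.exp 1 * Real.log 4 * (1 + Real.log x) := sum_nat_primes_log_div_le hx1
    _ ≤ Real.exp 1 * Real.log 4 * (2 * Real.log x) := by gcongr; linarith
    _ = _ := by ring

lemma sum_primes_inv_sq_le (x : ℝ) :
    ∑ 𝔭 ∈ primeIdealsLE K x, (1 : ℝ) / (Ideal.absNorm 𝔭 : ℝ) ^ 2 ≤
      Module.finrank ℚ K * 2 := by
  have h := sum_primes_le (K := K) (fun m => 1 / (m : ℝ) ^ 2) (fun m => by positivity)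
    (fun p f hp hf => by
      have hp0 : (0 : ℝ) < p := by exact_mod_cast hp.pos
      have h1 : (p : ℝ) ≤ (p : ℝ) ^ f :=
        le_self_pow₀ (by exact_mod_cast hp.one_lt.le) hf.ne'
      push_cast
      gcongr) x
  refine h.trans ?_
  gcongr
  refine le_trans ?_ (sum_inv_sq_le ⌊x⌋₊)
  exact Finset.sum_le_sum_of_subset_of_nonneg (Finset.filter_subset _ _)
    (fun _ _ _ => by positivity)

end Primes

/-! ### Truncated Euler products -/

section EulerProducts

variable {K : Type} [Field K] [NumberField K]

/-- The sum of `1 / N 𝔭` over the nonzero prime ideals of norm at most `t`. -/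
def primeRecip (K : Type) [Field K] [NumberField K] (t : ℝ) : ℝ :=
  ∑ 𝔭 ∈ primeIdealsLE K t, (1 : ℝ) / Ideal.absNorm 𝔭

/-- The ideals of norm at most `t` with all prime factors in `P`. -/
def smoothLE (P : Finset (Ideal (𝓞 K))) (t : ℝ) : Finset (Ideal (𝓞 K)) :=
  (idealsLE K t).filter (fun b => ∀ 𝔮 : Ideal (𝓞 K), 𝔮.IsPrime → 𝔮 ∣ b → 𝔮 ∈ P)

lemma mem_smoothLE {P : Finset (Ideal (𝓞 K))} {t : ℝ} {b : Ideal (𝓞 K)} :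
    b ∈ smoothLE P t ↔ (b ≠ ⊥ ∧ (Ideal.absNorm b : ℝ) ≤ t) ∧
      ∀ 𝔮 : Ideal (𝓞 K), 𝔮.IsPrime → 𝔮 ∣ b → 𝔮 ∈ P := by
  rw [smoothLE, Finset.mem_filter, mem_idealsLE]

/-- Adjoining one prime `𝔭` multiplies the sum by at most `(1 - 1 / N 𝔭)⁻¹`: the multiples of `𝔭`
contribute `1 / N 𝔭` times a part of the same sum. -/
lemma smooth_insert_le (P : Finset (Ideal (𝓞 K))) {𝔭 : Ideal (𝓞 K)} (h0 : 𝔭 ≠ ⊥) (t : ℝ) :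
    ∑ b ∈ smoothLE (insert 𝔭 P) t, (1 : ℝ) / Ideal.absNorm b ≤
      ∑ b ∈ smoothLE P t, (1 : ℝ) / Ideal.absNorm b +
      1 / Ideal.absNorm 𝔭 * ∑ b ∈ smoothLE (insert 𝔭 P) t, (1 : ℝ) / Ideal.absNorm b := by
  have hN := one_le_absNorm h0
  nth_rewrite 1 [← Finset.sum_filter_add_sum_filter_not (smoothLE (insert 𝔭 P) t)
    (fun b => ¬ 𝔭 ∣ b)]
  refine add_le_add ?_ ?_
  · refine Finset.sum_le_sum_of_subset_of_nonneg (fun b hb => ?_) (fun _ _ _ => by positivity)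
    obtain ⟨h1, h2⟩ := Finset.mem_filter.mp hb
    obtain ⟨h3, h4⟩ := mem_smoothLE.mp h1
    refine mem_smoothLE.mpr ⟨h3, fun 𝔮 hq hqb => ?_⟩
    rcases Finset.mem_insert.mp (h4 𝔮 hq hqb) with h | h
    · exact absurd (h ▸ hqb) h2
    · exact h
  · have hsub : (smoothLE (insert 𝔭 P) t).filter (fun b => ¬ ¬ 𝔭 ∣ b) ⊆
        (smoothLE (insert 𝔭 P) t).image (fun c => 𝔭 * c) := by
      intro b hb
      obtain ⟨h1, h2⟩ := Finset.mem_filter.mp hb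
      obtain ⟨c, rfl⟩ := not_not.mp h2
      obtain ⟨⟨h3, h4⟩, h5⟩ := mem_smoothLE.mp h1
      have hc0 : c ≠ ⊥ := fun h => h3 (by rw [h, Ideal.mul_bot])
      rw [absNorm_mul_cast] at h4
      refine Finset.mem_image.mpr ⟨c, mem_smoothLE.mpr ⟨⟨hc0, ?_⟩, fun 𝔮 hq hqc => ?_⟩, rfl⟩
      · exact (le_mul_of_one_le_left (Nat.cast_nonneg _) hN).trans h4
      · exact h5 𝔮 hq (hqc.mul_left 𝔭)
    refine (Finset.sum_le_sum_of_subset_of_nonneg hsub (fun _ _ _ => by positivity)).trans ?_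
    rw [Finset.sum_image (fun a _ b _ h => mul_left_cancel₀ h0 h), Finset.mul_sum]
    refine le_of_eq (Finset.sum_congr rfl fun c _ => ?_)
    rw [absNorm_mul_cast]
    field_simp

lemma one_le_mul_exp {a : ℝ} (ha : a ≤ 1 / 2) :
    1 ≤ (1 - a) * Real.exp (a + 2 * a ^ 2) := by
  have h := Real.add_one_le_exp (a + 2 * a ^ 2)
  nlinarith [mul_nonneg (sq_nonneg a) (by linarith : 0 ≤ 1 - 2 * a)]

/-- Half of an Euler product comparison: the sum over ideals with all prime factors in `P` is at most
`∏ (1 - 1 / N 𝔭)⁻¹`, here bounded through `one_le_mul_exp`. -/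
lemma smooth_le (P : Finset (Ideal (𝓞 K))) (hP : ∀ 𝔭 ∈ P, 𝔭 ≠ ⊥ ∧ 𝔭.IsPrime) (t : ℝ) :
    ∑ b ∈ smoothLE P t, (1 : ℝ) / Ideal.absNorm b ≤
      Real.exp (∑ 𝔭 ∈ P, (1 / (Ideal.absNorm 𝔭 : ℝ) + 2 * (1 / (Ideal.absNorm 𝔭 : ℝ)) ^ 2)) := by
  induction P using Finset.induction_on with
  | empty =>
    have hsub : smoothLE (∅ : Finset (Ideal (𝓞 K))) t ⊆ {⊤} := by
      intro b hb
      obtain ⟨-, h⟩ := mem_smoothLE.mp hb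
      rw [Finset.mem_singleton]
      by_contra hne
      obtain ⟨M, hM, hle⟩ := Ideal.exists_le_maximal b hne
      exact absurd (h M hM.isPrime (Ideal.dvd_iff_le.mpr hle)) (Finset.notMem_empty M)
    refine (Finset.sum_le_sum_of_subset_of_nonneg hsub (fun _ _ _ => by positivity)).trans ?_
    simp
  | insert 𝔭 P hnot ih =>
    obtain ⟨h0, hp⟩ := hP 𝔭 (Finset.mem_insert_self _ _)
    have hN := two_le_absNorm h0 hp
    have ih' := ih fun 𝔮 h => hP 𝔮 (Finset.mem_insert_of_mem h)
    have hstep := smooth_insert_le P h0 t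
    have ha : 1 / (Ideal.absNorm 𝔭 : ℝ) ≤ 1 / 2 := one_div_le_one_div_of_le two_pos hN
    rw [Finset.sum_insert hnot, Real.exp_add]
    set a := 1 / (Ideal.absNorm 𝔭 : ℝ) with haa
    set S := ∑ b ∈ smoothLE (insert 𝔭 P) t, (1 : ℝ) / Ideal.absNorm b
    have hS0 : 0 ≤ S := Finset.sum_nonneg fun _ _ => by positivity
    have h1 := one_le_mul_exp ha
    have hE := Real.exp_pos (a + 2 * a ^ 2)
    calc S ≤ S * ((1 - a) * Real.exp (a + 2 * a ^ 2)) := le_mul_of_one_le_right hS0 h1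
      _ = Real.exp (a + 2 * a ^ 2) * (S - a * S) := by ring
      _ ≤ _ := by gcongr; linarith

/-- Every ideal of norm at most `y` is composed of primes of norm at most `y`, so `recipSum` is
dominated by the Euler product. -/
lemma recipSum_le (y : ℝ) :
    recipSum K y ≤ Real.exp (4 * Module.finrank ℚ K) * Real.exp (primeRecip K y) := by
  have h := smooth_le (primeIdealsLE K y) (fun 𝔭 h =>
    ⟨(mem_primeIdealsLE.mp h).1.1, (mem_primeIdealsLE.mp h).2⟩) y
  have hset : smoothLE (primeIdealsLE K y) y = idealsLE K y := by
    refine Finset.filter_true_of_mem fun b hb 𝔮 hq hqb => ?_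
    obtain ⟨h1, h2⟩ := mem_idealsLE.mp hb
    refine mem_primeIdealsLE.mpr ⟨⟨fun h => h1 ?_, le_trans ?_ h2⟩, hq⟩
    · rw [h] at hqb
      exact zero_dvd_iff.mp hqb
    · have h3 := Ideal.absNorm_dvd_absNorm_of_le (Ideal.dvd_iff_le.mp hqb)
      exact_mod_cast Nat.le_of_dvd (Nat.pos_of_ne_zero (Ideal.absNorm_eq_zero_iff.not.mpr h1)) h3
  rw [hset] at h
  refine h.trans ?_
  rw [← Real.exp_add, Real.exp_le_exp, Finset.sum_add_distrib, ← Finset.mul_sum, ← primeRecip]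
  have := sum_primes_inv_sq_le (K := K) y
  simp only [one_div_pow]
  linarith

/-- The truncated Euler product `∏ (1 + 1 / N 𝔭)` over prime ideals of norm at most `t`. -/
def sqfreeProd (K : Type) [Field K] [NumberField K] (t : ℝ) : ℝ :=
  ∏ 𝔭 ∈ primeIdealsLE K t, (1 + 1 / (Ideal.absNorm 𝔭 : ℝ))

lemma exp_le_mul {a : ℝ} (h0 : 0 ≤ a) (h1 : a ≤ 1) : Real.exp a ≤ (1 + a) * Real.exp (a ^ 2) := by
  have h := Real.abs_exp_sub_one_sub_id_le (x := a) (by rwa [abs_of_nonneg h0])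
  have h2 := Real.add_one_le_exp (a ^ 2)
  have h3 := (abs_le.mp h).2
  nlinarith [mul_nonneg h0 (sq_nonneg a)]

lemma exp_primeRecip_le (x : ℝ) :
    Real.exp (primeRecip K x) ≤ Real.exp (2 * Module.finrank ℚ K) * sqfreeProd K x := by
  have h1 : Real.exp (primeRecip K x) ≤ ∏ 𝔭 ∈ primeIdealsLE K x,
      ((1 + 1 / (Ideal.absNorm 𝔭 : ℝ)) * Real.exp ((1 / (Ideal.absNorm 𝔭 : ℝ)) ^ 2)) := by
    rw [primeRecip, Real.exp_sum]
    refine Finset.prod_le_prod (fun _ _ => (Real.exp_pos _).le) fun 𝔭 h => ?_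
    have h1 := one_le_absNorm (mem_primeIdealsLE.mp h).1.1
    exact exp_le_mul (by positivity) ((div_le_one (by linarith)).mpr h1)
  rw [Finset.prod_mul_distrib, ← Real.exp_sum, ← sqfreeProd, mul_comm] at h1
  refine h1.trans ?_
  have h2 := sum_primes_inv_sq_le (K := K) x
  have h3 : 0 ≤ sqfreeProd K x := Finset.prod_nonneg fun _ _ => by positivity
  gcongr
  simp only [one_div_pow]
  linarith

/-- Unique factorization, for squarefree products. -/
lemma prod_injOn (x : ℝ) :
    Set.InjOn (fun s : Finset (Ideal (𝓞 K)) => ∏ 𝔭 ∈ s, 𝔭) (primeIdealsLE K x).powerset := by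
  have key : ∀ s ∈ (primeIdealsLE K x).powerset, ∀ s' ∈ (primeIdealsLE K x).powerset,
      ∏ 𝔭 ∈ s, 𝔭 = ∏ 𝔭 ∈ s', 𝔭 → s ⊆ s' := by
    intro s hs s' hs' h 𝔭 hp
    have hpr : ∀ 𝔮 ∈ primeIdealsLE K x, Prime 𝔮 := fun 𝔮 hq =>
      Ideal.prime_of_isPrime (mem_primeIdealsLE.mp hq).1.1 (mem_primeIdealsLE.mp hq).2
    have h1 := hpr 𝔭 (Finset.mem_powerset.mp hs hp)
    have h2 : 𝔭 ∣ ∏ 𝔭 ∈ s', 𝔭 := h ▸ Finset.dvd_prod_of_mem (fun 𝔭 => 𝔭) hp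
    obtain ⟨𝔮, hq, hdvd⟩ := h1.exists_mem_finset_dvd h2
    have h3 := hpr 𝔮 (Finset.mem_powerset.mp hs' hq)
    rwa [associated_iff_eq.mp (h1.associated_of_dvd h3 hdvd)]
  exact fun s hs s' hs' h => (key s hs s' hs' h).antisymm (key s' hs' s hs h.symm)

/-- The exponent in `sqfreeProd_le`. -/
def cRankin (n : ℕ) : ℝ := 2 * cLog n + 1

/-- Rankin's trick: expanding the product, the squarefree ideals of norm beyond `x ^ cRankin n`
account for at most half of it. -/
lemma sqfreeProd_le {x : ℝ} (hx : Real.exp 1 ≤ x) :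
    sqfreeProd K x ≤ 2 * recipSum K (x ^ cRankin (Module.finrank ℚ K)) := by
  set n := Module.finrank ℚ K with hn
  set A := cRankin n with hA
  have hx0 : 0 < x := (Real.exp_pos 1).trans_le hx
  have hl : 1 ≤ Real.log x := (Real.le_log_iff_exp_le hx0).mpr hx
  set δ := 1 / Real.log x with hδ
  have hδ0 : 0 < δ := by positivity
  set P := primeIdealsLE K x with hP
  have hP1 : ∀ 𝔭 ∈ P, (1 : ℝ) ≤ Ideal.absNorm 𝔭 := fun 𝔭 h =>
    one_le_absNorm (mem_primeIdealsLE.mp h).1.1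
  let N : Finset (Ideal (𝓞 K)) → ℝ := fun s => ((Ideal.absNorm (∏ 𝔭 ∈ s, 𝔭) : ℕ) : ℝ)
  have hNpos : ∀ s ∈ P.powerset, 0 < N s := by
    intro s hs
    simp only [N, absNorm_prod]
    exact Finset.prod_pos fun 𝔭 h => by linarith [hP1 𝔭 (Finset.mem_powerset.mp hs h)]
  have hexp : sqfreeProd K x = ∑ s ∈ P.powerset, 1 / N s := by
    rw [sqfreeProd, Finset.prod_one_add]
    refine Finset.sum_congr rfl fun s _ => ?_
    simp only [N, absNorm_prod, one_div, Finset.prod_inv_distrib]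
  have hexp2 : ∏ 𝔭 ∈ P, (1 + Real.exp (δ * Real.log (Ideal.absNorm 𝔭)) / Ideal.absNorm 𝔭) =
      ∑ s ∈ P.powerset, Real.exp (δ * Real.log (N s)) / N s := by
    rw [Finset.prod_one_add]
    refine Finset.sum_congr rfl fun s hs => ?_
    simp only [N, absNorm_prod]
    rw [Finset.prod_div_distrib, ← Real.exp_sum, Real.log_prod (fun 𝔭 h => by
      linarith [hP1 𝔭 (Finset.mem_powerset.mp hs h)]), Finset.mul_sum]
  have hsmall : ∑ s ∈ P.powerset with N s ≤ x ^ A, 1 / N s ≤ recipSum K (x ^ A) := by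
    have hinj : Set.InjOn (fun s : Finset (Ideal (𝓞 K)) => ∏ 𝔭 ∈ s, 𝔭)
        (P.powerset.filter (fun s => N s ≤ x ^ A)) :=
      (prod_injOn x).mono (by exact_mod_cast Finset.filter_subset _ _)
    have h1 : ∑ s ∈ P.powerset with N s ≤ x ^ A, 1 / N s =
        ∑ b ∈ (P.powerset.filter (fun s => N s ≤ x ^ A)).image (fun s => ∏ 𝔭 ∈ s, 𝔭),
          (1 : ℝ) / Ideal.absNorm b := by
      rw [Finset.sum_image hinj]
    rw [h1, recipSum]
    refine Finset.sum_le_sum_of_subset_of_nonneg (fun b hb => ?_) (fun _ _ _ => by positivity)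
    obtain ⟨s, hs, rfl⟩ := Finset.mem_image.mp hb
    obtain ⟨hs1, hs2⟩ := Finset.mem_filter.mp hs
    refine mem_idealsLE.mpr ⟨fun h => ?_, hs2⟩
    have h2 := hNpos s hs1
    simp only [N] at h2
    rw [h, Ideal.absNorm_bot, Nat.cast_zero] at h2
    exact lt_irrefl _ h2
  -- Rankin's trick: `N s > x ^ A` gives `exp (δ * log (N s)) > exp A`
  have hlarge : ∑ s ∈ P.powerset with ¬ N s ≤ x ^ A, 1 / N s ≤
      Real.exp (-A) * ∑ s ∈ P.powerset, Real.exp (δ * Real.log (N s)) / N s := by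
    rw [Finset.mul_sum]
    refine le_trans (Finset.sum_le_sum (g := fun s =>
      Real.exp (-A) * (Real.exp (δ * Real.log (N s)) / N s)) fun s hs => ?_)
      (Finset.sum_le_sum_of_subset_of_nonneg (Finset.filter_subset _ _) fun s hs _ => ?_)
    · obtain ⟨hs1, hs2⟩ := Finset.mem_filter.mp hs
      have hpos := hNpos s hs1
      rw [← mul_div_assoc, ← Real.exp_add]
      gcongr
      refine Real.one_le_exp ?_
      have h1 : A * Real.log x ≤ Real.log (N s) := by
        rw [← Real.log_rpow hx0]
        exact Real.log_le_log (by positivity) (not_le.mp hs2).le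
      have h2 : A ≤ δ * Real.log (N s) := by
        rw [hδ, one_div_mul_eq_div, le_div_iff₀ (by linarith)]
        exact h1
      linarith
    · have hpos := hNpos s hs
      positivity
  have hcomp : ∏ 𝔭 ∈ P, (1 + Real.exp (δ * Real.log (Ideal.absNorm 𝔭)) / Ideal.absNorm 𝔭) ≤
      sqfreeProd K x * Real.exp (2 * cLog n) := by
    have h1 : ∏ 𝔭 ∈ P, (1 + Real.exp (δ * Real.log (Ideal.absNorm 𝔭)) / Ideal.absNorm 𝔭) ≤
        ∏ 𝔭 ∈ P, ((1 + 1 / (Ideal.absNorm 𝔭 : ℝ)) *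
          Real.exp (2 * δ * (Real.log (Ideal.absNorm 𝔭) / Ideal.absNorm 𝔭))) := by
      refine Finset.prod_le_prod (fun _ _ => by positivity) fun 𝔭 h => ?_
      have hN1 := hP1 𝔭 h
      have hNx := (mem_primeIdealsLE.mp h).1.2
      set v := (Ideal.absNorm 𝔭 : ℝ) with hv
      have hlv : 0 ≤ Real.log v := Real.log_nonneg hN1
      have hθ0 : 0 ≤ δ * Real.log v := by positivity
      have hθ1 : δ * Real.log v ≤ 1 := by
        rw [hδ, one_div_mul_eq_div, div_le_one (by linarith)]
        exact Real.log_le_log (by linarith) hNx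
      have h2 := Real.abs_exp_sub_one_le (x := δ * Real.log v) (by rwa [abs_of_nonneg hθ0])
      rw [abs_of_nonneg hθ0] at h2
      have h3 := (abs_le.mp h2).2
      have h4 := Real.add_one_le_exp (2 * δ * (Real.log v / v))
      have hv0 : 0 < v := by linarith
      calc 1 + Real.exp (δ * Real.log v) / v ≤ 1 + (1 + 2 * (δ * Real.log v)) / v := by
            gcongr; linarith
        _ = 1 + 1 / v + 2 * δ * (Real.log v / v) := by ring
        _ ≤ (1 + 1 / v) * (1 + 2 * δ * (Real.log v / v)) := by
            have : 0 ≤ 1 / v * (2 * δ * (Real.log v / v)) := by positivity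
            linarith
        _ ≤ _ := by gcongr; linarith
    rw [Finset.prod_mul_distrib, ← Real.exp_sum, ← Finset.mul_sum] at h1
    refine h1.trans ?_
    have h3 : 0 ≤ sqfreeProd K x := Finset.prod_nonneg fun _ _ => by positivity
    rw [hP, ← sqfreeProd]
    refine mul_le_mul_of_nonneg_left (Real.exp_le_exp.mpr ?_) h3
    have h4 := sum_primes_log_div_le (K := K) hx
    calc 2 * δ * ∑ 𝔭 ∈ primeIdealsLE K x, Real.log (Ideal.absNorm 𝔭) / Ideal.absNorm 𝔭
        ≤ 2 * δ * (cLog n * Real.log x) := by gcongr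
      _ = 2 * cLog n := by rw [hδ]; field_simp
  have hQ0 : 0 ≤ sqfreeProd K x := Finset.prod_nonneg fun _ _ => by positivity
  have hhalf : Real.exp (-A) * (sqfreeProd K x * Real.exp (2 * cLog n)) ≤ sqfreeProd K x / 2 := by
    have h1 : Real.exp (-A) * Real.exp (2 * cLog n) = Real.exp (-1) := by
      rw [← Real.exp_add, hA, cRankin]; congr 1; ring
    have h2 : Real.exp (-1) ≤ 1 / 2 := by
      rw [Real.exp_neg, ← one_div]
      have := Real.add_one_le_exp (1 : ℝ)
      exact one_div_le_one_div_of_le two_pos (by linarith)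
    calc _ = sqfreeProd K x * (Real.exp (-A) * Real.exp (2 * cLog n)) := by ring
      _ ≤ sqfreeProd K x * (1 / 2) := by rw [h1]; gcongr
      _ = _ := by ring
  have htot : sqfreeProd K x ≤ recipSum K (x ^ A) + sqfreeProd K x / 2 := by
    calc sqfreeProd K x = ∑ s ∈ P.powerset with N s ≤ x ^ A, 1 / N s +
          ∑ s ∈ P.powerset with ¬ N s ≤ x ^ A, 1 / N s := by
          rw [hexp, Finset.sum_filter_add_sum_filter_not]
      _ ≤ recipSum K (x ^ A) + sqfreeProd K x / 2 := by
          refine add_le_add hsmall (hlarge.trans (le_trans ?_ hhalf))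
          rw [← hexp2]
          gcongr
  linarith

end EulerProducts

/-! ### Mertens' bound -/

section Conclusion

variable {K : Type} [Field K] [NumberField K]

lemma one_le_cRankin (n : ℕ) : 1 ≤ cRankin n := by
  have := cLog_nonneg n
  unfold cRankin
  linarith

/-- The constant whose logarithm is the error in `primeRecip_sub_le_of_large`. -/
def cMain (n : ℕ) : ℝ :=
  Real.exp (2 * n) * 2 * cGrowth n * cRankin n * Real.exp (4 * n)

/-- The bound once the lower end of the range exceeds a fixed power of the discriminant. -/
lemma primeRecip_sub_le_of_large {x z : ℝ} (hz : Real.exp 1 ≤ z)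
    (hzD : 2 ^ Module.finrank ℚ K * (absDisc K : ℝ) < Real.sqrt z) (hzx : z ≤ x) :
    primeRecip K x - primeRecip K z ≤
      Real.log (Real.log x) - Real.log (Real.log z) + Real.log (cMain (Module.finrank ℚ K)) := by
  set n := Module.finrank ℚ K with hn
  have hz0 : 0 < z := (Real.exp_pos 1).trans_le hz
  have hx0 : 0 < x := hz0.trans_le hzx
  have hlz : 1 ≤ Real.log z := (Real.le_log_iff_exp_le hz0).mpr hz
  have hlx : Real.log z ≤ Real.log x := Real.log_le_log hz0 hzx
  have hA := one_le_cRankin n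
  have hG := cGrowth_pos n
  have hx1 : 1 ≤ x := ((Real.one_le_exp zero_le_one).trans hz).trans hzx
  have hX : z ≤ x ^ cRankin n := hzx.trans (by
    conv_lhs => rw [← Real.rpow_one x]
    exact Real.rpow_le_rpow_of_exponent_le hx1 hA)
  have h1 := exp_primeRecip_le (K := K) x
  have h2 := sqfreeProd_le (K := K) (hz.trans hzx)
  have h3 := recipSum_growth (K := K) hz hzD hX
  have h4 := recipSum_le (K := K) z
  rw [← hn] at h1 h2 h3 h4
  rw [Real.log_rpow hx0] at h3
  have hM : 0 < cMain n := by unfold cMain; positivity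
  have h5 : Real.exp (primeRecip K x) ≤
      cMain n * (Real.log x / Real.log z) * Real.exp (primeRecip K z) := by
    calc Real.exp (primeRecip K x) ≤ Real.exp (2 * n) * sqfreeProd K x := h1
      _ ≤ Real.exp (2 * n) * (2 * recipSum K (x ^ cRankin n)) := by gcongr
      _ ≤ Real.exp (2 * n) * (2 * (cGrowth n * recipSum K z *
          (cRankin n * Real.log x / Real.log z))) := by gcongr
      _ ≤ Real.exp (2 * n) * (2 * (cGrowth n * (Real.exp (4 * n) * Real.exp (primeRecip K z)) *
          (cRankin n * Real.log x / Real.log z))) := by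
          have : 0 ≤ cRankin n * Real.log x / Real.log z :=
            div_nonneg (mul_nonneg (by linarith) (by linarith)) (by linarith)
          gcongr
      _ = _ := by rw [cMain]; ring
  have hlx0 : 0 < Real.log x := by linarith
  have hlz0 : 0 < Real.log z := by linarith
  have h6 := Real.log_le_log (Real.exp_pos _) h5
  rw [Real.log_exp, Real.log_mul (by positivity) (by positivity), Real.log_exp,
    Real.log_mul (by positivity) (by positivity), Real.log_div hlx0.ne' hlz0.ne'] at h6
  linarith

lemma primeRecip_sub_eq {x y : ℝ} (hyx : y ≤ x) :
    primeRecip K x - primeRecip K y =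
      ∑ 𝔭 ∈ primeIdealsLE K x with y < (Ideal.absNorm 𝔭 : ℝ), (1 : ℝ) / Ideal.absNorm 𝔭 := by
  have hset : (primeIdealsLE K x).filter (fun 𝔭 => ¬ y < (Ideal.absNorm 𝔭 : ℝ)) =
      primeIdealsLE K y := by
    ext 𝔭
    rw [Finset.mem_filter, mem_primeIdealsLE, mem_primeIdealsLE, not_lt]
    constructor
    · rintro ⟨⟨⟨h1, -⟩, h2⟩, h3⟩
      exact ⟨⟨h1, h3⟩, h2⟩
    · rintro ⟨⟨h1, h3⟩, h2⟩
      exact ⟨⟨⟨h1, h3.trans hyx⟩, h2⟩, h3⟩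
  rw [primeRecip, primeRecip, ← hset, sub_eq_iff_eq_add, Finset.sum_filter_add_sum_filter_not]

/-- On a range `(y, z]` with `log z / log y` bounded, the first Mertens estimate suffices. -/
lemma primeRecip_sub_le_of_short {y z : ℝ} (hy : Real.exp 1 ≤ y) (hyz : y ≤ z) :
    primeRecip K z - primeRecip K y ≤
      cLog (Module.finrank ℚ K) * (Real.log z / Real.log y) := by
  have hy0 : 0 < y := (Real.exp_pos 1).trans_le hy
  have hly : 1 ≤ Real.log y := (Real.le_log_iff_exp_le hy0).mpr hy
  have hly0 : 0 < Real.log y := by linarith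
  rw [primeRecip_sub_eq hyz]
  calc ∑ 𝔭 ∈ primeIdealsLE K z with y < (Ideal.absNorm 𝔭 : ℝ), (1 : ℝ) / Ideal.absNorm 𝔭
      ≤ ∑ 𝔭 ∈ primeIdealsLE K z with y < (Ideal.absNorm 𝔭 : ℝ),
          Real.log (Ideal.absNorm 𝔭) / Ideal.absNorm 𝔭 / Real.log y := by
        refine Finset.sum_le_sum fun 𝔭 h => ?_
        obtain ⟨h1, h2⟩ := Finset.mem_filter.mp h
        have hN : (0 : ℝ) < Ideal.absNorm 𝔭 := hy0.trans h2
        rw [div_right_comm]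
        gcongr
        exact (one_le_div hly0).mpr (Real.log_le_log hy0 h2.le)
    _ ≤ ∑ 𝔭 ∈ primeIdealsLE K z,
          Real.log (Ideal.absNorm 𝔭) / Ideal.absNorm 𝔭 / Real.log y := by
        refine Finset.sum_le_sum_of_subset_of_nonneg (Finset.filter_subset _ _) fun 𝔭 _ _ => ?_
        have := Real.log_natCast_nonneg (Ideal.absNorm 𝔭)
        positivity
    _ = (∑ 𝔭 ∈ primeIdealsLE K z, Real.log (Ideal.absNorm 𝔭) / Ideal.absNorm 𝔭) /
          Real.log y := (Finset.sum_div ..).symm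
    _ ≤ cLog (Module.finrank ℚ K) * Real.log z / Real.log y := by
        gcongr
        exact sum_primes_log_div_le (hy.trans hyz)
    _ = _ := mul_div_assoc _ _ _

/-- The constant of the theorem, in terms of the degree. -/
def cFinal (n : ℕ) : ℝ := |Real.log (cMain n)| + cLog n * (2 * (n + 2)) + 1

lemma primeRecip_sub_le {x y : ℝ} (hy : max (absDisc K : ℝ) (Real.exp 1) ≤ y) (hyx : y ≤ x) :
    primeRecip K x - primeRecip K y ≤
      Real.log (Real.log x) - Real.log (Real.log y) + cFinal (Module.finrank ℚ K) := by
  set n := Module.finrank ℚ K with hn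
  have hye : Real.exp 1 ≤ y := (le_max_right _ _).trans hy
  have hyD : (absDisc K : ℝ) ≤ y := (le_max_left _ _).trans hy
  have hy2 : 2 ≤ y := by
    have := Real.add_one_le_exp (1 : ℝ); linarith
  have hy0 : 0 < y := by linarith
  have hly : 1 ≤ Real.log y := (Real.le_log_iff_exp_le hy0).mpr hye
  have hll : Real.log (Real.log y) ≤ Real.log (Real.log x) :=
    Real.log_le_log (by linarith) (Real.log_le_log hy0 hyx)
  have habs := le_abs_self (Real.log (cMain n))
  have habs0 := abs_nonneg (Real.log (cMain n))
  -- `z` is a power of `y` large enough to beat `(2 ^ n * D) ^ 2`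
  set z := (y ^ (n + 2)) ^ 2 with hz
  have hsqrt : Real.sqrt z = y ^ (n + 2) := Real.sqrt_sq (by positivity)
  have hlz : Real.log z = 2 * (n + 2) * Real.log y := by
    rw [hz, Real.log_pow, Real.log_pow]; push_cast; ring
  have hyz : y ≤ z := by
    rw [hz, ← pow_mul]
    exact le_self_pow₀ (by linarith) (by positivity)
  have hzD : 2 ^ n * (absDisc K : ℝ) < Real.sqrt z := by
    rw [hsqrt]
    calc 2 ^ n * (absDisc K : ℝ) ≤ y ^ n * y := by gcongr
      _ < y ^ n * y ^ 2 := by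
          have : y < y ^ 2 := by nlinarith
          gcongr
      _ = y ^ (n + 2) := by ring
  have hshort := primeRecip_sub_le_of_short (K := K) hye hyz
  rw [hlz, mul_div_assoc, div_self (by linarith), mul_one, ← hn] at hshort
  unfold cFinal
  rcases le_total z x with hzx | hxz
  · have hlarge := primeRecip_sub_le_of_large (K := K) (hye.trans hyz) hzD hzx
    rw [← hn] at hlarge
    have : Real.log (Real.log y) ≤ Real.log (Real.log z) :=
      Real.log_le_log (by linarith) (Real.log_le_log hy0 hyz)
    linarith
  · have hmono : primeRecip K x ≤ primeRecip K z := by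
      refine sub_nonneg.mp ?_
      rw [primeRecip_sub_eq hxz]
      exact Finset.sum_nonneg fun _ _ => by positivity
    linarith

end Conclusion

/-- **Lemma 6.3 (Mertens upper bound over number fields).** For any number field `k` and
any reals `x ≥ y ≥ max{D_k, e}`,
`∑_{y < N𝔭 ≤ x} 1/N𝔭 ≤ log log x - log log y + O_{[k:ℚ]}(1)`,
the implied constant effective and depending only on `[k:ℚ]`. -/
theorem mertens_upper_bound (n₀ : ℕ) :
    ∃ C : ℝ, 0 < C ∧
      ∀ (k : Type) [Field k] [NumberField k],
        Module.finrank ℚ k = n₀ →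
        ∀ x y : ℝ, max (absDisc k : ℝ) (Real.exp 1) ≤ y → y ≤ x →
          (∑ᶠ (𝔭 : Ideal (𝓞 k))
              (_ : 𝔭.IsPrime ∧ 𝔭 ≠ ⊥ ∧ y < (Ideal.absNorm 𝔭 : ℝ) ∧
                (Ideal.absNorm 𝔭 : ℝ) ≤ x),
              (1 : ℝ) / (Ideal.absNorm 𝔭 : ℝ)) ≤
            Real.log (Real.log x) - Real.log (Real.log y) + C := by
  refine ⟨cFinal n₀, ?_, ?_⟩
  · have := cLog_nonneg n₀
    unfold cFinal
    positivity
  · rintro k _ _ rfl x y hy hyx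
    rw [finsum_cond_eq_sum_of_cond_iff
      (t := (primeIdealsLE k x).filter (fun 𝔭 => y < (Ideal.absNorm 𝔭 : ℝ))) _ (fun {𝔭} _ => by
        rw [Finset.mem_filter, mem_primeIdealsLE]; tauto), ← primeRecip_sub_eq hyx]
    exact primeRecip_sub_le hy hyx

end ArtinStark
end
end

section
/- Let K/k be a Galois extension of number fields with Galois group G, and let ψ ∈ Ψ_{K/k}(G) with real zero β_ψ. Then for any real T(ψ) ≥ max{q(ψ), e}: (i) 0 < η(ψ) ≤ 1, 0 < η(ψ, T(ψ)) ≤ 1, and η(ψ) ≤ 2·η(ψ, T(ψ)); and (ii) if moreover T(ψ) ≤ q(ψ)^A for some real A ≥ 1, then η(ψ, T(ψ)) ≤ e^A · η(ψ). -/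
/-!
Put `a = 1 - β > 0`. The hypothesis `1 - 1 / (4 log q) < β < 1` forces `0 < log q` (for `q ≤ 1` the
junk value `1 / 0 = 0` would give `1 < β`) and `0 < a log q < 1 / 4`. Substituting `u = a log t`
turns the integral into the exponential integral `E₁(x) = ∫_x^∞ e^{-u} du / u` at `x = a log T`,
and everything follows from two elementary bounds.

* `E₁(x) ≤ log (1 + 1 / x)` (`integral_kernel_le`), from `e^u ≥ 1 + u`, since
  `1 / (u (1 + u))` is minus the derivative of `log (1 + 1 / u)`. Hence
  `2 exp (-E₁(x)) ≥ 2 x / (1 + x) ≥ min x 1 ≥ a log q`.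
* `E₁(x) ≥ -log x - 1` for `x ≤ 1` (`le_integral_kernel`), from `e^{-u} ≥ 1 - u` on `[x, 1]`. Hence
  `exp (-E₁(x)) ≤ e x`, and `e x ≤ e A a log q ≤ e^A a log q` when `log T ≤ A log q`.

The substitution is not carried out: the comparison functions are written in the variable `t`.
-/

open Filter Topology NumberField
open scoped BigOperators Classical

noncomputable section

namespace ArtinStark

/-- The integrand, with the power of `t` written as an exponential of `log t`. -/
lemma kernel_eq {β t : ℝ} (ht : 1 < t) :
    1 / (t ^ (2 - β) * Real.log t) =
      Real.exp (-((1 - β) * Real.log t)) * (1 / (t * Real.log t)) := by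
  have h0 : 0 < t := by linarith
  have h : t ^ (2 - β) = t * Real.exp ((1 - β) * Real.log t) := by
    rw [show (2 - β) = 1 + (1 - β) by ring, Real.rpow_add h0, Real.rpow_one,
      Real.rpow_def_of_pos h0 (1 - β), mul_comm (Real.log t)]
  have hl := Real.log_pos ht
  rw [h, Real.exp_neg]
  field_simp

lemma kernel_nonneg {β t : ℝ} (ht : 1 < t) : 0 ≤ 1 / (t ^ (2 - β) * Real.log t) := by
  have h0 : 0 < t := by linarith
  have := Real.log_pos ht
  positivity

lemma kernel_continuousOn (β : ℝ) {T : ℝ} (hT : 1 < T) :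
    ContinuousOn (fun t : ℝ => 1 / (t ^ (2 - β) * Real.log t)) (Set.Ici T) := by
  intro t ht
  have ht1 : 1 < t := lt_of_lt_of_le hT ht
  have h0 : 0 < t := by linarith
  have hl := Real.log_pos ht1
  refine ContinuousAt.continuousWithinAt ?_
  refine ContinuousAt.div continuousAt_const
    ((Real.continuousAt_rpow_const _ _ (Or.inl h0.ne')).mul (Real.continuousAt_log h0.ne')) ?_
  positivity

/-- The bound `e^{-u} / u ≤ 1 / (u (1 + u))` with `u = (1 - β) log t`. -/
lemma kernel_le {β t : ℝ} (hβ : β < 1) (ht : 1 < t) :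
    1 / (t ^ (2 - β) * Real.log t) ≤
      1 / (t * Real.log t * (1 + (1 - β) * Real.log t)) := by
  have h0 : 0 < t := by linarith
  have hl := Real.log_pos ht
  have hu : 0 < (1 - β) * Real.log t := mul_pos (by linarith) hl
  rw [kernel_eq ht, Real.exp_neg, mul_comm, ← one_div, one_div_mul_one_div]
  have := Real.add_one_le_exp ((1 - β) * Real.log t)
  gcongr
  linarith

lemma hasDerivAt_upper {a t : ℝ} (ha : 0 < a) (ht : 1 < t) :
    HasDerivAt (fun t : ℝ => -Real.log (1 + (a * Real.log t)⁻¹))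
      (1 / (t * Real.log t * (1 + a * Real.log t))) t := by
  have h0 : 0 < t := by linarith
  have hl := Real.log_pos ht
  have hu : 0 < a * Real.log t := mul_pos ha hl
  have h1 := ((((Real.hasDerivAt_log h0.ne').const_mul a).fun_inv hu.ne').const_add 1).log
    (by positivity)
  refine h1.fun_neg.congr_deriv ?_
  field_simp
  ring

lemma tendsto_upper {a : ℝ} (ha : 0 < a) :
    Tendsto (fun t : ℝ => -Real.log (1 + (a * Real.log t)⁻¹)) atTop (𝓝 0) := by
  have h := (tendsto_inv_atTop_zero.comp
    (Real.tendsto_log_atTop.const_mul_atTop ha)).const_add (1 : ℝ)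
  have h2 := (h.log (by norm_num)).neg
  simpa using h2

lemma integrableOn_kernel {β T : ℝ} (hβ : β < 1) (hT : 1 < T) :
    MeasureTheory.IntegrableOn (fun t : ℝ => 1 / (t ^ (2 - β) * Real.log t)) (Set.Ioi T) := by
  have ha : 0 < 1 - β := by linarith
  have hg : MeasureTheory.IntegrableOn
      (fun t : ℝ => 1 / (t * Real.log t * (1 + (1 - β) * Real.log t))) (Set.Ioi T) := by
    refine MeasureTheory.integrableOn_Ioi_deriv_of_nonneg'
      (fun t ht => hasDerivAt_upper ha (lt_of_lt_of_le hT ht)) (fun t ht => ?_) (tendsto_upper ha)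
    have ht1 : 1 < t := hT.trans ht
    exact (kernel_nonneg ht1).trans (kernel_le hβ ht1)
  refine MeasureTheory.Integrable.mono' hg
    (((kernel_continuousOn β hT).mono Set.Ioi_subset_Ici_self).aestronglyMeasurable
      measurableSet_Ioi) ?_
  refine (MeasureTheory.ae_restrict_iff' measurableSet_Ioi).2 (Filter.Eventually.of_forall ?_)
  intro t ht
  have ht1 : 1 < t := hT.trans ht
  rw [Real.norm_of_nonneg (kernel_nonneg ht1)]
  exact kernel_le hβ ht1

/-- The bound `E₁(x) ≤ log (1 + 1 / x)` at `x = (1 - β) log T`. -/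
lemma integral_kernel_le {β T : ℝ} (hβ : β < 1) (hT : 1 < T) :
    ∫ t in Set.Ioi T, 1 / (t ^ (2 - β) * Real.log t) ≤
      Real.log (1 + ((1 - β) * Real.log T)⁻¹) := by
  have ha : 0 < 1 - β := by linarith
  have hd : ∀ t ∈ Set.Ici T, HasDerivAt (fun t : ℝ => -Real.log (1 + ((1 - β) * Real.log t)⁻¹))
      (1 / (t * Real.log t * (1 + (1 - β) * Real.log t))) t :=
    fun t ht => hasDerivAt_upper ha (lt_of_lt_of_le hT ht)
  have hn : ∀ t ∈ Set.Ioi T, 0 ≤ 1 / (t * Real.log t * (1 + (1 - β) * Real.log t)) :=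
    fun t ht => (kernel_nonneg (hT.trans ht)).trans (kernel_le hβ (hT.trans ht))
  have hv := MeasureTheory.integral_Ioi_of_hasDerivAt_of_nonneg' hd hn (tendsto_upper ha)
  have hi := MeasureTheory.integrableOn_Ioi_deriv_of_nonneg' hd hn (tendsto_upper ha)
  calc _ ≤ ∫ t in Set.Ioi T, 1 / (t * Real.log t * (1 + (1 - β) * Real.log t)) :=
        MeasureTheory.setIntegral_mono_on (integrableOn_kernel hβ hT) hi measurableSet_Ioi
          (fun t ht => kernel_le hβ (hT.trans ht))
    _ = _ := by rw [hv]; ring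

/-- The bound `E₁(x) ≥ -log x - 1` for `x = (1 - β) log T ≤ 1`, obtained by truncating the integral
at `t = exp (1 / (1 - β))`, that is, at `u = 1`. -/
lemma le_integral_kernel {β T : ℝ} (hβ : β < 1) (hT : 1 < T)
    (hx : (1 - β) * Real.log T ≤ 1) :
    -Real.log ((1 - β) * Real.log T) - 1 ≤
      ∫ t in Set.Ioi T, 1 / (t ^ (2 - β) * Real.log t) := by
  have ha : 0 < 1 - β := by linarith
  have hlT := Real.log_pos hT
  set S := Real.exp (1 / (1 - β)) with hS
  have hTS : T ≤ S := by
    rw [hS, ← Real.log_le_iff_le_exp (by linarith), le_div_iff₀ ha]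
    linarith
  have hd : ∀ t ∈ Set.uIcc T S,
      HasDerivAt (fun t : ℝ => Real.log (Real.log t) - (1 - β) * Real.log t)
        ((1 - (1 - β) * Real.log t) * (1 / (t * Real.log t))) t := by
    intro t ht
    rw [Set.uIcc_of_le hTS] at ht
    have ht1 : 1 < t := lt_of_lt_of_le hT ht.1
    have h0 : 0 < t := by linarith
    have hl := Real.log_pos ht1
    refine (((Real.hasDerivAt_log h0.ne').log hl.ne').fun_sub
      ((Real.hasDerivAt_log h0.ne').const_mul (1 - β))).congr_deriv ?_
    field_simp
  have hc : ContinuousOn (fun t : ℝ => (1 - (1 - β) * Real.log t) * (1 / (t * Real.log t)))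
      (Set.uIcc T S) := by
    intro t ht
    rw [Set.uIcc_of_le hTS] at ht
    have ht1 : 1 < t := lt_of_lt_of_le hT ht.1
    have h0 : 0 < t := by linarith
    have hl := Real.log_pos ht1
    have hlc := Real.continuousAt_log h0.ne'
    exact ((continuousAt_const.sub (continuousAt_const.mul hlc)).mul
      (continuousAt_const.div (continuousAt_id.mul hlc)
        (mul_pos h0 hl).ne')).continuousWithinAt
  have hv := intervalIntegral.integral_eq_sub_of_hasDerivAt hd hc.intervalIntegrable
  have hlog : Real.log S = 1 / (1 - β) := Real.log_exp _
  have hval : -Real.log ((1 - β) * Real.log T) - 1 ≤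
      ∫ t in T..S, (1 - (1 - β) * Real.log t) * (1 / (t * Real.log t)) := by
    rw [hv, hlog, Real.log_mul ha.ne' hlT.ne', one_div, Real.log_inv, mul_inv_cancel₀ ha.ne']
    have := mul_pos ha hlT
    linarith
  have hfi := integrableOn_kernel hβ hT
  have hsub : Set.Ioc T S ⊆ Set.Ioi T := Set.Ioc_subset_Ioi_self
  refine hval.trans ?_
  rw [intervalIntegral.integral_of_le hTS]
  refine le_trans (MeasureTheory.setIntegral_mono_on
    ((intervalIntegrable_iff_integrableOn_Ioc_of_le hTS).1 hc.intervalIntegrable)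
    (hfi.mono_set hsub) measurableSet_Ioc (fun t ht => ?_))
    (MeasureTheory.setIntegral_mono_set hfi ?_ hsub.eventuallyLE)
  · have ht1 : 1 < t := hT.trans ht.1
    have h0 : 0 < t := by linarith
    have hl := Real.log_pos ht1
    rw [kernel_eq ht1]
    have := Real.add_one_le_exp (-((1 - β) * Real.log t))
    gcongr
    linarith
  · refine (MeasureTheory.ae_restrict_iff' measurableSet_Ioi).2 (Filter.Eventually.of_forall ?_)
    exact fun t ht => kernel_nonneg (hT.trans ht)

/-- **Proposition 7.3 (i)–(ii).** Let `ψ ∈ Ψ_{K/k}(G)` be potentially exceptional with real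
zero `β_ψ`, and write `η(ψ) = (1-β_ψ) log q(ψ)` and, for `τ ≥ 3`,
`η(ψ,τ) = exp(-∫_τ^∞ dt/(t^{2-β_ψ} log t))`.  Then for any `T ≥ max{q(ψ), e}`:
(i) `0 < η(ψ) ≤ 1`, `0 < η(ψ,T) ≤ 1`, and `η(ψ) ≤ 2 η(ψ,T)`;
(ii) if moreover `T ≤ q(ψ)^A` for some `A ≥ 1`, then `η(ψ,T) ≤ e^A η(ψ)`. -/
theorem eta_comparisons
    (k K : Type) [Field k] [NumberField k] [Field K] [NumberField K]
    [Algebra k K] [IsGalois k K] [FiniteDimensional k K]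
    (ψ : (K ≃ₐ[k] K) → ℂ) (Lψ : ℂ → ℂ) (q : ℕ) (β : ℝ) (T : ℝ)
    -- ψ ∈ Ψ_{K/k}(G) with real zero β = β_ψ and analytic conductor q = q(ψ):
    (hψ : IsIrreducibleCharacter ψ) (hψ2 : ∀ g, ψ g ^ 2 = 1)
    (hβ₁ : 1 - 1 / (4 * Real.log (q : ℝ)) < β) (hβ₂ : β < 1)
    (hzero : Lψ (β : ℂ) = 0)
    (hT : max (q : ℝ) (Real.exp 1) ≤ T) :
    (0 < (1 - β) * Real.log (q : ℝ) ∧ (1 - β) * Real.log (q : ℝ) ≤ 1 ∧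
      0 < Real.exp (-(∫ t in Set.Ioi T, 1 / (t ^ (2 - β) * Real.log t))) ∧
      Real.exp (-(∫ t in Set.Ioi T, 1 / (t ^ (2 - β) * Real.log t))) ≤ 1 ∧
      (1 - β) * Real.log (q : ℝ) ≤
        2 * Real.exp (-(∫ t in Set.Ioi T, 1 / (t ^ (2 - β) * Real.log t)))) ∧
    (∀ A : ℝ, 1 ≤ A → T ≤ (q : ℝ) ^ A →
      Real.exp (-(∫ t in Set.Ioi T, 1 / (t ^ (2 - β) * Real.log t))) ≤
        Real.exp A * ((1 - β) * Real.log (q : ℝ))) := by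
  have ha : 0 < 1 - β := by linarith
  have hlq : 0 < Real.log (q : ℝ) := by
    have h : 0 < 1 / (4 * Real.log (q : ℝ)) := by linarith
    have := one_div_pos.1 h
    linarith
  have hy4 : (1 - β) * Real.log (q : ℝ) < 1 / 4 := by
    have h : 1 - β < 1 / (4 * Real.log (q : ℝ)) := by linarith
    rw [lt_div_iff₀ (by positivity)] at h
    linarith
  have hy : 0 < (1 - β) * Real.log (q : ℝ) := mul_pos ha hlq
  have hq0 : (0 : ℝ) < q := by
    rcases (Nat.cast_nonneg q : (0 : ℝ) ≤ q).eq_or_lt with h | h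
    · rw [← h, Real.log_zero] at hlq
      exact absurd hlq (lt_irrefl _)
    · exact h
  have hqT : (q : ℝ) ≤ T := (le_max_left _ _).trans hT
  have hT1 : 1 < T :=
    (Real.one_lt_exp_iff.2 one_pos).trans_le ((le_max_right _ _).trans hT)
  have hx : 0 < (1 - β) * Real.log T := mul_pos ha (Real.log_pos hT1)
  have hyx : (1 - β) * Real.log (q : ℝ) ≤ (1 - β) * Real.log T :=
    mul_le_mul_of_nonneg_left (Real.log_le_log hq0 hqT) ha.le
  have hI0 : 0 ≤ ∫ t in Set.Ioi T, 1 / (t ^ (2 - β) * Real.log t) :=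
    MeasureTheory.setIntegral_nonneg measurableSet_Ioi
      (fun t ht => kernel_nonneg (hT1.trans ht))
  have hup := integral_kernel_le hβ₂ hT1
  have hlow := le_integral_kernel hβ₂ hT1
  set I := ∫ t in Set.Ioi T, 1 / (t ^ (2 - β) * Real.log t)
  have hI1 : Real.exp (-I) ≤ 1 := Real.exp_le_one_iff.2 (by linarith)
  refine ⟨⟨hy, by linarith, Real.exp_pos _, hI1, ?_⟩, ?_⟩
  · have h1 : (1 + ((1 - β) * Real.log T)⁻¹)⁻¹ ≤ Real.exp (-I) := by
      rw [Real.exp_neg]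
      refine inv_anti₀ (Real.exp_pos _) ?_
      rwa [← Real.le_log_iff_exp_le (by positivity)]
    set x := (1 - β) * Real.log T
    have h2 : (1 + x⁻¹)⁻¹ = x / (1 + x) := by
      field_simp
      ring
    rw [h2] at h1
    have h3 : (1 - β) * Real.log (q : ℝ) ≤ 2 * (x / (1 + x)) := by
      rw [mul_div_assoc', le_div_iff₀ (by positivity)]
      nlinarith
    linarith
  · intro A hA hTA
    have hlT : Real.log T ≤ A * Real.log q := by
      rw [← Real.log_rpow hq0]
      exact Real.log_le_log (by linarith) hTA
    have hxA : (1 - β) * Real.log T ≤ A * ((1 - β) * Real.log q) := by nlinarith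
    set x := (1 - β) * Real.log T
    have hex : Real.exp (-I) ≤ Real.exp 1 * x := by
      rcases le_total x 1 with h | h
      · rw [← Real.exp_log hx, ← Real.exp_add, Real.exp_le_exp]
        linarith [hlow h]
      · have := Real.add_one_le_exp (1 : ℝ)
        nlinarith
    have heA : Real.exp 1 * A ≤ Real.exp A := by
      have h1 : A ≤ Real.exp (A - 1) := by linarith [Real.add_one_le_exp (A - 1)]
      have h2 : Real.exp A = Real.exp 1 * Real.exp (A - 1) := by
        rw [← Real.exp_add]; congr 1; ring
      rw [h2]
      exact mul_le_mul_of_nonneg_left h1 (Real.exp_pos _).le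
    calc Real.exp (-I) ≤ Real.exp 1 * x := hex
      _ ≤ Real.exp 1 * (A * ((1 - β) * Real.log q)) :=
        mul_le_mul_of_nonneg_left hxA (Real.exp_pos _).le
      _ = Real.exp 1 * A * ((1 - β) * Real.log q) := by ring
      _ ≤ Real.exp A * ((1 - β) * Real.log q) := mul_le_mul_of_nonneg_right heA hy.le

end ArtinStark
end
end
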